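/- arXiv:1412.1429 — 4 statements merged into one kernel-verified Lean document; each statement's English description precedes it below -/
import Mathlib

section
/- Variational Lemma: Let μ and ν be probability measures on ℝ in convex order and c : ℝ² → ℝ a Borel measurable cost function satisfying c(x,y) ≥ a(x) + b(y) for some a ∈ L¹(μ) and b ∈ L¹(ν). Assume π ∈ 𝓜(μ,ν) minimises π' ↦ ∫ c dπ' over 𝓜(μ,ν) and ∫ c dπ < ∞. Then there exists a Borel set Γ ⊆ ℝ² with π(Γ) = 1 such that for every measure α on ℝ² with finite support contained in Γ and every competitor α' of α, one has ∫ c dα ≤ ∫ c dα'. -/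
open MeasureTheory

noncomputable section

/-- A martingale coupling of `μ` and `ν`. -/
def IsMartingaleCoupling (μ ν : Measure ℝ) (π : Measure (ℝ × ℝ)) : Prop :=
  IsProbabilityMeasure π ∧ π.map Prod.fst = μ ∧ π.map Prod.snd = ν ∧
    ∀ h : ℝ → ℝ, Measurable h → (∃ C, ∀ x, |h x| ≤ C) →
      ∫ p : ℝ × ℝ, h p.1 * (p.2 - p.1) ∂π = 0

/-- `μ` and `ν` are in convex order. -/
def InConvexOrder (μ ν : Measure ℝ) : Prop :=
  ∀ φ : ℝ → ℝ, ConvexOn ℝ Set.univ φ → Integrable φ μ → Integrable φ ν →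
    ∫ x, φ x ∂μ ≤ ∫ x, φ x ∂ν

/-- `α` has finite support contained in `Γ`. -/
def HasFiniteSupportIn (α : Measure (ℝ × ℝ)) (Γ : Set (ℝ × ℝ)) : Prop :=
  ∃ S : Finset (ℝ × ℝ), ↑S ⊆ Γ ∧ α ((↑S : Set (ℝ × ℝ))ᶜ) = 0

/-- `α'` is a competitor of `α`: a finitely supported measure with the same
marginals whose fiberwise barycenters agree with those of `α`. -/
def IsCompetitor (α α' : Measure (ℝ × ℝ)) : Prop :=
  (∃ S : Finset (ℝ × ℝ), α' ((↑S : Set (ℝ × ℝ))ᶜ) = 0) ∧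
  α'.map Prod.fst = α.map Prod.fst ∧
  α'.map Prod.snd = α.map Prod.snd ∧
  ∀ x : ℝ, ∫ p in {p : ℝ × ℝ | p.1 = x}, p.2 ∂α' =
    ∫ p in {p : ℝ × ℝ | p.1 = x}, p.2 ∂α

/-!
Call a finite configuration of points, with masses, improvable if it has a cheaper competitor. If
the improvable configurations carried a nonzero measure whose point marginals are dominated by `π`,
then mixing them would remove a part of `π` and replace it by something cheaper without changing the
marginals or the fiberwise barycenters, contradicting the minimality of `π`. By Kellerer's duality,
each improvable configuration therefore has a point in a `π`-null set which depends only on the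
numbers of points and on a bound for their size, and `Γ` avoids these countably many null sets.
Countably many moments, taken over intervals with rational endpoints, encode the competitor
relation, so that improvability is a Borel condition.

In Kellerer's duality the improvable configurations are parametrized by sequences of natural numbers
so that their points depend continuously on the parameter. On a compact set of sequences the
Hahn-Banach and Riesz theorems produce the dominated measure, unless inexpensive functions cover
that set. If every compact set had inexpensive covers, Choquet's scheme would give inexpensive
covers of the whole space; this rests on the continuity of the minimal `L²` cost along increasing
sets, which holds because the covers of a set form a closed convex subset of a Hilbert space.
-/

section Duality

open Filter Set BoundedContinuousFunction
open scoped Topology NNReal ENNReal CompactlySupported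

lemma measure_le_of_forall_lintegral_le {E : Type*} [TopologicalSpace E] [HasOuterApproxClosed E]
    [MeasurableSpace E] [BorelSpace E] {μ ν : Measure E} [IsFiniteMeasure μ] [μ.WeaklyRegular]
    [IsFiniteMeasure ν] (h : ∀ f : E →ᵇ ℝ≥0, ∫⁻ x, f x ∂μ ≤ ∫⁻ x, f x ∂ν) : μ ≤ ν := by
  have le_of_isClosed (F : Set E) (hF : IsClosed F) : μ F ≤ ν F :=
    le_of_tendsto_of_tendsto' (HasOuterApproxClosed.tendsto_lintegral_apprSeq hF μ)
      (HasOuterApproxClosed.tendsto_lintegral_apprSeq hF ν) fun _ => h _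
  refine Measure.le_iff.2 fun s hs => ?_
  rw [hs.measure_eq_iSup_isClosed_of_ne_top (measure_ne_top μ s)]
  exact iSup₂_le fun F hFs => iSup_le fun hF => (le_of_isClosed F hF).trans (measure_mono hFs)

lemma exists_measure_forall_integral_eq {C : Type*} [TopologicalSpace C] [CompactSpace C]
    [T2Space C] [MeasurableSpace C] [BorelSpace C] (Λ : C(C, ℝ) →ₗ[ℝ] ℝ)
    (hΛ : ∀ g, 0 ≤ g → 0 ≤ Λ g) :
    ∃ lam : Measure C, IsFiniteMeasure lam ∧ ∀ g : C(C, ℝ), ∫ z, g z ∂lam = Λ g := by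
  let toContinuousMap : C_c(C, ℝ) →ₗ[ℝ] C(C, ℝ) :=
    { toFun := fun g => g.toContinuousMap, map_add' := fun _ _ => rfl, map_smul' := fun _ _ => rfl }
  let L : C_c(C, ℝ) →ₚ[ℝ] ℝ := PositiveLinearMap.mk₀ (Λ ∘ₗ toContinuousMap) fun g hg => hΛ _ hg
  refine ⟨RealRMK.rieszMeasure L, ?_, fun g =>
    RealRMK.integral_rieszMeasure L (CompactlySupportedContinuousMap.continuousMapEquiv g)⟩
  have : IsFiniteMeasureOnCompacts (RealRMK.rieszMeasure L) := by
    unfold RealRMK.rieszMeasure; infer_instance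
  infer_instance

variable {ι C E : Type*} [Fintype ι] [TopologicalSpace C] [TopologicalSpace E] [MeasurableSpace E]

/-- The continuous functions on `C` dominated by some `∑ i, h i ∘ q i` with `h ≥ 0` of total
`π`-integral less than `δ`: the part of the dual transport problem of value below `δ`. -/
def dualSublevel (π : Measure E) (q : ι → C → E) (δ : ℝ) : Set C(C, ℝ) :=
  {g | ∃ h : ι → E →ᵇ ℝ, 0 ≤ h ∧ (∀ z, g z ≤ ∑ i, h i (q i z)) ∧ ∑ i, ∫ x, h i x ∂π < δ}

variable {π : Measure E} {q : ι → C → E} {δ : ℝ}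

lemma comp_mem_dualSublevel {i : ι} (hq : Continuous (q i)) {h : E →ᵇ ℝ} (h_nonneg : 0 ≤ h)
    (hδ : ∫ x, h x ∂π < δ) : h.toContinuousMap.comp ⟨q i, hq⟩ ∈ dualSublevel π q δ := by
  classical
  refine ⟨Pi.single i h, Pi.single_nonneg.2 h_nonneg, fun z => ?_, ?_⟩
  · rw [Finset.sum_eq_single i (fun j _ hj => by simp [hj]) (by simp)]
    simp
  · rw [Finset.sum_eq_single i (fun j _ hj => by simp [hj]) (by simp)]
    simpa using hδ

variable [BorelSpace E] [IsFiniteMeasure π]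

lemma convex_dualSublevel : Convex ℝ (dualSublevel π q δ) := by
  rintro g ⟨h, h_nonneg, hg, hδ⟩ g' ⟨h', h'_nonneg, hg', hδ'⟩ a b ha hb hab
  refine ⟨a • h + b • h', fun i x => add_nonneg (mul_nonneg ha (h_nonneg i x))
    (mul_nonneg hb (h'_nonneg i x)), fun z => ?_, ?_⟩
  · calc a * g z + b * g' z ≤ a * ∑ i, h i (q i z) + b * ∑ i, h' i (q i z) := by
          gcongr; exacts [hg z, hg' z]
      _ = ∑ i, (a • h + b • h') i (q i z) := by
          simp [Finset.mul_sum, Finset.sum_add_distrib]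
  · have cost_eq (i : ι) : ∫ x, (a • h + b • h') i x ∂π =
        a * ∫ x, h i x ∂π + b * ∫ x, h' i x ∂π := by
      rw [← integral_const_mul, ← integral_const_mul, ← integral_add
        (((h i).integrable π).const_mul a) (((h' i).integrable π).const_mul b)]
      rfl
    simp only [cost_eq, Finset.sum_add_distrib, ← Finset.mul_sum]
    exact convex_Iio δ hδ hδ' ha hb hab

variable [CompactSpace C]

lemma exists_separating_functional_of_dual_bound (hδ : 0 < δ)
    (dual_bound : ∀ h : ι → E →ᵇ ℝ, 0 ≤ h → (∀ z, 1 ≤ ∑ i, h i (q i z)) →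
      δ ≤ ∑ i, ∫ x, h i x ∂π) :
    ∃ Φ : C(C, ℝ) →L[ℝ] ℝ, ∃ u ≤ 0, (∀ g : C(C, ℝ), (∀ z, 1 < g z) → Φ g < u) ∧
      ∀ g ∈ dualSublevel π q δ, u ≤ Φ g := by
  have isOpen_gt_one : IsOpen {g : C(C, ℝ) | MapsTo g univ (Ioi 1)} :=
    ContinuousMap.isOpen_setOfPred_mapsTo isCompact_univ isOpen_Ioi
  have convex_gt_one : Convex ℝ {g : C(C, ℝ) | MapsTo g univ (Ioi 1)} :=
    fun g hg g' hg' a b ha hb hab z hz => convex_Ioi (1 : ℝ) (hg hz) (hg' hz) ha hb hab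
  have disjoint_gt_one : Disjoint {g : C(C, ℝ) | MapsTo g univ (Ioi 1)} (dualSublevel π q δ) := by
    refine Set.disjoint_left.2 fun g hg ⟨h, h_nonneg, hgh, hcost⟩ => hcost.not_ge ?_
    exact dual_bound h h_nonneg fun z => (hg (mem_univ z)).le.trans (hgh z)
  obtain ⟨Φ, u, hΦ_lt, hΦ_ge⟩ := geometric_hahn_banach_open convex_gt_one isOpen_gt_one
    convex_dualSublevel disjoint_gt_one
  refine ⟨Φ, u, ?_, fun g hg => hΦ_lt g fun z _ => hg z, hΦ_ge⟩
  simpa using hΦ_ge 0 ⟨0, le_rfl, by simp, by simpa using hδ⟩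

lemma exists_positive_functional_of_dual_bound (hq : ∀ i, Continuous (q i)) (hδ : 0 < δ)
    (dual_bound : ∀ h : ι → E →ᵇ ℝ, 0 ≤ h → (∀ z, 1 ≤ ∑ i, h i (q i z)) →
      δ ≤ ∑ i, ∫ x, h i x ∂π) :
    ∃ Λ : C(C, ℝ) →ₗ[ℝ] ℝ, (∀ g, 0 ≤ g → 0 ≤ Λ g) ∧ 0 < Λ 1 ∧
      ∀ i (h : E →ᵇ ℝ), 0 ≤ h → Λ (h.toContinuousMap.comp ⟨q i, hq i⟩) ≤ ∫ x, h x ∂π := by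
  obtain ⟨Φ, u, hu, hΦ_lt, hΦ_ge⟩ := exists_separating_functional_of_dual_bound hδ dual_bound
  have hΦ_two_add (g : C(C, ℝ)) (hg : 0 ≤ g) : Φ 2 + Φ g < 0 := by
    rw [← map_add]
    refine (hΦ_lt _ fun z => ?_).trans_le hu
    have : 0 ≤ g z := hg z
    change 1 < 2 + g z
    linarith
  have scale_pos : 0 < δ / (1 - u) := by bound
  refine ⟨-(δ / (1 - u)) • Φ.toLinearMap, fun g hg => ?_, ?_, fun i h h_nonneg => ?_⟩
  · suffices Φ g ≤ 0 from mul_nonneg_of_nonpos_of_nonpos (neg_nonpos.2 scale_pos.le) this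
    by_contra! hpos
    have hΦ_two : Φ 2 < 0 := by simpa using hΦ_two_add 0 le_rfl
    have := hΦ_two_add ((-Φ 2 / Φ g) • g) (smul_nonneg (by bound) hg)
    rw [map_smul, smul_eq_mul, div_mul_cancel₀ _ hpos.ne'] at this
    linarith
  · refine mul_pos_of_neg_of_neg (neg_neg_of_pos scale_pos) (?_ : Φ 1 < 0)
    have := hΦ_two_add 0 le_rfl
    rw [map_zero, add_zero, ← one_add_one_eq_two, map_add] at this
    linarith
  · set A : ℝ := -Φ (h.toContinuousMap.comp ⟨q i, hq i⟩) with hA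
    suffices δ / (1 - u) * A ≤ ∫ x, h x ∂π from (neg_mul_comm _ _).trans_le this
    by_contra! hlt
    have A_pos : 0 < A :=
      pos_of_mul_pos_right ((integral_nonneg h_nonneg).trans_lt hlt) scale_pos.le
    have t_nonneg : 0 ≤ (1 - u) / A := by bound
    have scaled_cost : ∫ x, ((1 - u) / A * h x) ∂π < δ := by
      rw [integral_const_mul, div_mul_eq_mul_div, div_lt_iff₀ A_pos, mul_comm]
      rwa [div_mul_eq_mul_div, lt_div_iff₀ (by linarith)] at hlt
    have scaled_nonneg : 0 ≤ ((1 - u) / A) • h := fun x => mul_nonneg t_nonneg (h_nonneg x)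
    have := hΦ_ge _ (comp_mem_dualSublevel (hq i) scaled_nonneg scaled_cost)
    change u ≤ Φ (((1 - u) / A) • h.toContinuousMap.comp ⟨q i, hq i⟩) at this
    rw [map_smul, smul_eq_mul, ← neg_eq_iff_eq_neg.2 hA, mul_neg,
      div_mul_cancel₀ _ A_pos.ne'] at this
    linarith

lemma exists_measure_map_le_of_dual_bound [TopologicalSpace.PseudoMetrizableSpace E]
    [T2Space C] [MeasurableSpace C] [BorelSpace C] (hq : ∀ i, Continuous (q i)) (hδ : 0 < δ)
    (dual_bound : ∀ h : ι → E →ᵇ ℝ, 0 ≤ h → (∀ z, 1 ≤ ∑ i, h i (q i z)) →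
      δ ≤ ∑ i, ∫ x, h i x ∂π) :
    ∃ lam : Measure C, IsFiniteMeasure lam ∧ lam ≠ 0 ∧ ∀ i, lam.map (q i) ≤ π := by
  obtain ⟨Λ, Λ_nonneg, Λ_one, Λ_le⟩ := exists_positive_functional_of_dual_bound hq hδ dual_bound
  obtain ⟨lam, hlam, integral_eq⟩ := exists_measure_forall_integral_eq Λ Λ_nonneg
  refine ⟨lam, hlam, ?_, fun i => measure_le_of_forall_lintegral_le fun f => ?_⟩
  · rintro rfl
    exact Λ_one.ne (by simpa using integral_eq 1)
  · let f_real : E →ᵇ ℝ := f.comp _ (LipschitzWith.subtype_val _)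
    have f_nonneg : 0 ≤ f_real := fun x => (f x).coe_nonneg
    have lintegral_eq (ρ : Measure E) [IsFiniteMeasure ρ] :
        ∫⁻ x, f x ∂ρ = ENNReal.ofReal (∫ x, f_real x ∂ρ) := by
      rw [ofReal_integral_eq_lintegral_ofReal (f_real.integrable ρ) (ae_of_all _ f_nonneg)]
      exact lintegral_congr fun x => ENNReal.ofReal_coe_nnreal.symm
    rw [lintegral_eq, lintegral_eq, integral_map (hq i).aemeasurable (by fun_prop)]
    exact ENNReal.ofReal_le_ofReal
      ((integral_eq (f_real.toContinuousMap.comp ⟨q i, hq i⟩)).trans_le (Λ_le i f_real f_nonneg))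

end Duality

section NestedConvex

open Filter Set
open scoped Topology

variable {H : Type*} [NormedAddCommGroup H] [InnerProductSpace ℝ H]

lemma norm_sub_sq_le_of_convex_of_forall_norm_le {K : Set H} (hK : Convex ℝ K) {x y : H}
    (hx : x ∈ K) (hy : y ∈ K) (hmin : ∀ z ∈ K, ‖x‖ ≤ ‖z‖) :
    ‖y - x‖ ^ 2 ≤ 2 * (‖y‖ ^ 2 - ‖x‖ ^ 2) := by
  have hmid := hmin _ (hK hy hx one_half_pos.le one_half_pos.le (add_halves 1))
  rw [← smul_add, norm_smul, Real.norm_of_nonneg one_half_pos.le] at hmid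
  nlinarith [parallelogram_law_with_norm ℝ y x, norm_nonneg x]

variable [CompleteSpace H]

lemma exists_forall_norm_le_of_isClosed_of_convex {K : Set H} (hne : K.Nonempty)
    (hclosed : IsClosed K) (hconv : Convex ℝ K) : ∃ x ∈ K, ∀ y ∈ K, ‖x‖ ≤ ‖y‖ := by
  obtain ⟨x, hx, norm_eq⟩ := exists_norm_eq_iInf_of_complete_convex hne hclosed.isComplete hconv 0
  simp only [zero_sub, norm_neg] at norm_eq
  refine ⟨x, hx, fun y hy => norm_eq.trans_le ?_⟩
  exact ciInf_le ⟨0, by rintro _ ⟨w, rfl⟩; exact norm_nonneg _⟩ (⟨y, hy⟩ : K)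

/- The points of minimal norm form a Cauchy sequence, which replaces weak compactness. -/
lemma exists_mem_iInter_norm_le_of_antitone {K : ℕ → Set H} (hK : Antitone K)
    (hclosed : ∀ n, IsClosed (K n)) (hconv : ∀ n, Convex ℝ (K n)) {r : ℝ}
    (hr : ∀ n, ∃ x ∈ K n, ‖x‖ ≤ r) : ∃ x ∈ ⋂ n, K n, ‖x‖ ≤ r := by
  choose x x_mem x_min using fun n => exists_forall_norm_le_of_isClosed_of_convex
    ((hr n).imp fun _ => And.left) (hclosed n) (hconv n)
  have x_le (n : ℕ) : ‖x n‖ ≤ r := let ⟨y, hy, hyr⟩ := hr n; (x_min n y hy).trans hyr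
  have norm_sq_mono : Monotone fun n => ‖x n‖ ^ 2 := fun m n hmn => by
    have := x_min m _ (hK hmn (x_mem n))
    dsimp only; gcongr
  have norm_sq_bdd : BddAbove (range fun n => ‖x n‖ ^ 2) :=
    ⟨r ^ 2, by rintro _ ⟨n, rfl⟩; have := x_le n; dsimp only; gcongr⟩
  have norm_sq_cauchy := (tendsto_atTop_ciSup norm_sq_mono norm_sq_bdd).cauchySeq
  have x_cauchy : CauchySeq x := by
    refine Metric.cauchySeq_iff'.2 fun ε hε => ?_
    obtain ⟨N, hN⟩ := Metric.cauchySeq_iff'.1 norm_sq_cauchy (ε ^ 2 / 2) (by positivity)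
    refine ⟨N, fun n hn => lt_of_pow_lt_pow_left₀ 2 hε.le ?_⟩
    have dist_lt := (le_abs_self _).trans_lt (hN n hn)
    have dist_sq_le :=
      norm_sub_sq_le_of_convex_of_forall_norm_le (hconv N) (x_mem N) (hK hn (x_mem n)) (x_min N)
    rw [dist_eq_norm]
    linarith
  obtain ⟨y, hy⟩ := cauchySeq_tendsto_of_complete x_cauchy
  refine ⟨y, mem_iInter.2 fun n => (hclosed n).mem_of_tendsto hy ?_, le_of_tendsto' hy.norm x_le⟩
  exact (eventually_ge_atTop n).mono fun k hk => hK hk (x_mem k)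

end NestedConvex

section Cover

open Filter Set
open scoped Topology

variable {ι B E : Type*} [Fintype ι] [MeasurableSpace E] {π : Measure E} {q : ι → B → E}

/-- The vector-valued `h ∈ L²(π)` such that, off some `π`-null set, the functions
`∑ i, h i ∘ q i` are at least `1` on `A`. The null set is part of the data because the `q i` need
not be nonsingular. -/
def l2Cover (π : Measure E) (q : ι → B → E) (A : Set B) : Set (Lp (EuclideanSpace ℝ ι) 2 π) :=
  {h | ∃ N, π N = 0 ∧ ∀ b ∈ A, (∀ i, q i b ∉ N) → 1 ≤ ∑ i, h (q i b) i}

lemma l2Cover_anti : Antitone (l2Cover π q) := fun _ _ hA _ ⟨N, hN, h_cover⟩ =>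
  ⟨N, hN, fun b hb => h_cover b (hA hb)⟩

lemma iInter_l2Cover_subset (A : ℕ → Set B) : ⋂ n, l2Cover π q (A n) ⊆ l2Cover π q (⋃ n, A n) := by
  intro h hh
  choose N hN h_cover using mem_iInter.1 hh
  refine ⟨⋃ n, N n, measure_iUnion_null hN, fun b hb hbN => ?_⟩
  obtain ⟨n, hn⟩ := mem_iUnion.1 hb
  exact h_cover n b hn fun i hi => hbN i (mem_iUnion.2 ⟨n, hi⟩)

lemma convex_l2Cover (A : Set B) : Convex ℝ (l2Cover π q A) := by
  rintro f ⟨N, hN, hf⟩ g ⟨M, hM, hg⟩ a b ha hb hab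
  have coe_eq : ∀ᵐ x ∂π, (a • f + b • g : Lp (EuclideanSpace ℝ ι) 2 π) x = a • f x + b • g x := by
    filter_upwards [Lp.coeFn_add (a • f) (b • g), Lp.coeFn_smul a f, Lp.coeFn_smul b g]
      with x h_add h_smul_f h_smul_g
    simp only [h_add, Pi.add_apply, h_smul_f, h_smul_g, Pi.smul_apply]
  refine ⟨N ∪ M ∪ {x | ¬ _}, measure_union_null (measure_union_null hN hM) coe_eq,
    fun s hs hsN => ?_⟩
  simp only [mem_union, not_or, mem_ofPred_eq, not_not] at hsN
  have sum_eq : ∑ i, (a • f + b • g : Lp (EuclideanSpace ℝ ι) 2 π) (q i s) i =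
      a * ∑ i, f (q i s) i + b * ∑ i, g (q i s) i := by
    simp only [Finset.mul_sum, ← Finset.sum_add_distrib]
    exact Finset.sum_congr rfl fun i _ => by rw [(hsN i).2]; rfl
  rw [sum_eq]
  exact convex_Ici (1 : ℝ) (hf s hs fun i => (hsN i).1.1) (hg s hs fun i => (hsN i).1.2) ha hb hab

lemma isClosed_l2Cover (A : Set B) : IsClosed (l2Cover π q A) := by
  refine IsSeqClosed.isClosed fun f g hf hfg => ?_
  choose N hN hf using hf
  obtain ⟨φ, -, hφ⟩ := (tendstoInMeasure_of_tendsto_Lp hfg).exists_seq_tendsto_ae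
  refine ⟨(⋃ n, N n) ∪ {x | ¬ Tendsto (fun n => f (φ n) x) atTop (𝓝 (g x))},
    measure_union_null (measure_iUnion_null hN) hφ, fun s hs hsN => ?_⟩
  simp only [mem_union, not_or, mem_ofPred_eq, not_not, mem_iUnion, not_exists] at hsN
  have tendsto_coord (i : ι) : Tendsto (fun n => f (φ n) (q i s) i) atTop (𝓝 (g (q i s) i)) :=
    ((EuclideanSpace.proj (𝕜 := ℝ) i).continuous.tendsto _).comp (hsN i).2
  exact ge_of_tendsto' (tendsto_finsetSum _ fun i _ => tendsto_coord i)
    fun n => hf (φ n) s hs fun i => (hsN i).1 (φ n)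

lemma exists_forall_lt_norm_of_monotone {r : ℝ} {A : ℕ → Set B} (hA : Monotone A)
    (h : ∀ f ∈ l2Cover π q (⋃ n, A n), r < ‖f‖) : ∃ n, ∀ f ∈ l2Cover π q (A n), r < ‖f‖ := by
  by_contra! exists_le
  obtain ⟨x, hx, hxr⟩ := exists_mem_iInter_norm_le_of_antitone (l2Cover_anti.comp_monotone hA)
    (fun n => isClosed_l2Cover (A n)) (fun n => convex_l2Cover (A n)) exists_le
  exact (h x (iInter_l2Cover_subset A hx)).not_ge hxr

lemma exists_null_of_zero_mem_l2Cover {A : Set B} (h : 0 ∈ l2Cover π q A) :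
    ∃ N, MeasurableSet N ∧ π N = 0 ∧ ∀ b ∈ A, ∃ i, q i b ∈ N := by
  obtain ⟨N, hN, h_cover⟩ := h
  have coe_zero : ∀ᵐ x ∂π, (0 : Lp (EuclideanSpace ℝ ι) 2 π) x = 0 := Lp.coeFn_zero _ 2 π
  refine ⟨toMeasurable π (N ∪ {x | ¬ _}), measurableSet_toMeasurable _ _,
    (measure_toMeasurable _).trans (measure_union_null hN coe_zero), fun b hb => ?_⟩
  by_contra! hbN
  replace hbN (i : ι) := notMem_subset (subset_toMeasurable π _) (hbN i)
  simp only [mem_union, not_or, mem_ofPred_eq, not_not] at hbN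
  have := h_cover b hb fun i => (hbN i).1
  rw [Finset.sum_eq_zero fun i _ => by rw [(hbN i).2]; rfl] at this
  exact zero_lt_one.not_ge this

lemma norm_sq_toLp {F : Type*} [NormedAddCommGroup F] [InnerProductSpace ℝ F] {f : E → F}
    (hf : MemLp f 2 π) : ‖hf.toLp f‖ ^ 2 = ∫ x, ‖f x‖ ^ 2 ∂π := by
  rw [← real_inner_self_eq_norm_sq, L2.inner_def]
  refine integral_congr_ae (hf.coeFn_toLp.mono fun x hx => ?_)
  simp only [hx, real_inner_self_eq_norm_sq]

end Cover

section BaireSpace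

open Filter Set
open scoped Topology

/-- The sequences whose first `m` entries are bounded by those of `s`. -/
def initialBox (s : ℕ → ℕ) (m : ℕ) : Set (ℕ → ℕ) :=
  {t | ∀ i < m, t i ≤ s i}

lemma initialBox_succ (s : ℕ → ℕ) (m : ℕ) :
    initialBox s (m + 1) = initialBox s m ∩ {t | t m ≤ s m} := by
  ext t
  exact Nat.forall_lt_succ_right

lemma isCompact_Iic_nat_pi (s : ℕ → ℕ) : IsCompact (Iic s) :=
  Icc_bot (a := s) ▸ isCompact_Icc

lemma exists_initialBox_subset {s : ℕ → ℕ} {U : Set (ℕ → ℕ)} (hU : IsOpen U) (hsU : Iic s ⊆ U) :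
    ∃ m, initialBox s m ⊆ U := by
  by_contra! not_subset
  choose t t_mem t_notMem using fun m => not_subset_iff_exists_mem_notMem.1 (not_subset m)
  obtain ⟨a, ha, φ, hφ, inf_tendsto⟩ := (isCompact_Iic_nat_pi s).tendsto_subseq
    (x := fun m => t m ⊓ s) fun m => mem_Iic.2 inf_le_right
  have t_tendsto : Tendsto (t ∘ φ) atTop (𝓝 a) := by
    refine tendsto_pi_nhds.2 fun i => (tendsto_pi_nhds.1 inf_tendsto i).congr' ?_
    filter_upwards [eventually_gt_atTop i] with k hk
    exact min_eq_left (t_mem (φ k) i (hk.trans_le (hφ.id_le k)))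
  obtain ⟨k, hk⟩ := (t_tendsto.eventually (hU.mem_nhds (hsU ha))).exists
  exact t_notMem (φ k) hk

/- Choquet's scheme: shrink one coordinate at a time. -/
lemma exists_forall_initialBox {G : Set (ℕ → ℕ) → Prop} (univ_mem : G univ)
    (hG : ∀ A : ℕ → Set (ℕ → ℕ), Monotone A → G (⋃ n, A n) → ∃ n, G (A n)) :
    ∃ s, ∀ m, G (initialBox s m) := by
  have exists_cut (m : ℕ) (A : {A // G A}) : ∃ k, G (A ∩ {t | t m ≤ k}) := by
    refine hG _ (fun k l hkl t ht => ⟨ht.1, ht.2.trans hkl⟩) ?_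
    have iUnion_cut : ⋃ k, {t : ℕ → ℕ | t m ≤ k} = univ :=
      iUnion_eq_univ_iff.2 fun t => ⟨t m, le_refl (t m)⟩
    rw [← inter_iUnion, iUnion_cut, inter_univ]
    exact A.2
  choose k hk using exists_cut
  let A (n : ℕ) : {A // G A} := n.rec ⟨univ, univ_mem⟩ fun m A => ⟨A ∩ {t | t m ≤ k m A}, hk m A⟩
  have initialBox_eq (m : ℕ) : initialBox (fun m => k m (A m)) m = (A m).1 := by
    induction m with
    | zero => exact eq_univ_of_forall fun t i hi => absurd hi i.not_lt_zero
    | succ m ih => rw [initialBox_succ, ih]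
  exact ⟨_, fun m => initialBox_eq m ▸ (A m).2⟩

end BaireSpace

section Kellerer

open Filter Set TopologicalSpace BoundedContinuousFunction

lemma one_le_sum_min_one {ι : Type*} {s : Finset ι} {a : ι → ℝ} (a_nonneg : ∀ i ∈ s, 0 ≤ a i)
    (ha : 1 ≤ ∑ i ∈ s, a i) : 1 ≤ ∑ i ∈ s, min (a i) 1 := by
  by_cases! h : ∃ i ∈ s, 1 ≤ a i
  · obtain ⟨i, hi, one_le⟩ := h
    calc 1 = min (a i) 1 := (min_eq_right one_le).symm
      _ ≤ ∑ i ∈ s, min (a i) 1 :=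
        Finset.single_le_sum (fun j hj => le_min (a_nonneg j hj) zero_le_one) hi
  · rwa [Finset.sum_congr rfl fun i hi => min_eq_left (h i hi).le]

lemma exists_surjective_forall_continuous_comp {ι E : Type*} [Countable ι] [TopologicalSpace E]
    [SecondCountableTopology E] [MeasurableSpace E] [BorelSpace E] {Z : Type*} [MeasurableSpace Z]
    [StandardBorelSpace Z] [Nonempty Z] {q : ι → Z → E}
    (hq : ∀ i, Measurable (q i)) :
    ∃ f : (ℕ → ℕ) → Z, Measurable f ∧ Function.Surjective f ∧ ∀ i, Continuous (q i ∘ f) := by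
  let := upgradeStandardBorel Z
  let τ₀ := (inferInstance : TopologicalSpace Z)
  obtain ⟨τ, τ_le, q_continuous, τ_polish⟩ :=
    (measurable_pi_lambda (fun z i => q i z) hq).exists_continuous
  obtain ⟨f, f_continuous, f_surjective⟩ :=
    @PolishSpace.exists_nat_nat_continuous_surjective Z τ τ_polish _
  have f_continuous_std : @Continuous _ _ _ τ₀ f := continuous_le_rng τ_le f_continuous
  exact ⟨f, @Continuous.measurable _ _ _ _ _ τ₀ _ _ _ f_continuous_std, f_surjective, fun i =>
    (continuous_apply i).comp (q_continuous.comp f_continuous)⟩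

variable {ι E : Type*} [Fintype ι] [TopologicalSpace E] [MeasurableSpace E] [BorelSpace E]
  {π : Measure E} [IsFiniteMeasure π] {q : ι → (ℕ → ℕ) → E}

/-- Truncating `h` at `1` makes its squares integrable at the cost of the original `h`, and doubling
it makes the covering condition hold on a neighbourhood of the compact set `Iic s`. -/
lemma exists_mem_l2Cover_initialBox (hq : ∀ i, Continuous (q i)) {h : ι → E →ᵇ ℝ}
    (h_nonneg : 0 ≤ h) {s : ℕ → ℕ} (h_cover : ∀ t ∈ Iic s, 1 ≤ ∑ i, h i (q i t)) :
    ∃ m, ∃ φ ∈ l2Cover π q (initialBox s m), ‖φ‖ ^ 2 ≤ 4 * ∑ i, ∫ x, h i x ∂π := by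
  have trunc_nonneg (i : ι) (x : E) : 0 ≤ min (h i x) 1 := le_min (h_nonneg i x) zero_le_one
  have isOpen_cover : IsOpen {t | 1 / 2 < ∑ i, min (h i (q i t)) 1} :=
    isOpen_lt continuous_const (by fun_prop)
  obtain ⟨m, hm⟩ := exists_initialBox_subset isOpen_cover fun t ht => one_half_lt_one.trans_le
    (one_le_sum_min_one (fun i _ => h_nonneg i (q i t)) (h_cover t ht))
  let φ (x : E) : EuclideanSpace ℝ ι := WithLp.toLp 2 fun i => 2 * min (h i x) 1
  have memLp_φ : MemLp φ 2 π := MemLp.of_eval_piLp fun i =>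
    (((2 : ℝ) • (h i ⊓ 1)).memLp_top).mono_exponent le_top
  refine ⟨m, memLp_φ.toLp φ, ⟨{x | ¬ _}, memLp_φ.coeFn_toLp, fun t ht htN => ?_⟩, ?_⟩
  · simp only [mem_ofPred_eq, not_not] at htN
    simp only [htN, φ, ← Finset.mul_sum]
    linarith [mem_ofPred_eq ▸ hm ht]
  · have integrable_h (i : ι) : Integrable (h i) π := (h i).integrable π
    rw [norm_sq_toLp, ← integral_finsetSum _ fun i _ => integrable_h i, ← integral_const_mul]
    refine integral_mono_of_nonneg (ae_of_all _ fun x => sq_nonneg _)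
      ((integrable_finsetSum _ fun i _ => integrable_h i).const_mul 4) (ae_of_all _ fun x => ?_)
    simp only [EuclideanSpace.real_norm_sq_eq, φ, Finset.mul_sum]
    refine Finset.sum_le_sum fun i _ => ?_
    nlinarith [trunc_nonneg i x, min_le_left (h i x) 1, min_le_right (h i x) 1]

lemma exists_measure_map_le_of_zero_notMem_l2Cover [PseudoMetrizableSpace E]
    (hq : ∀ i, Continuous (q i)) (h_zero : 0 ∉ l2Cover π q univ) :
    ∃ lam : Measure (ℕ → ℕ), IsFiniteMeasure lam ∧ lam ≠ 0 ∧ ∀ i, lam.map (q i) ≤ π := by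
  obtain ⟨r, r_pos, ball_subset⟩ :=
    Metric.isOpen_iff.1 (isClosed_l2Cover univ).isOpen_compl 0 h_zero
  obtain ⟨s, hs⟩ := exists_forall_initialBox
    (G := fun A => ∀ f ∈ l2Cover π q A, r / 2 < ‖f‖)
    (fun f hf => by
      by_contra! norm_le
      exact ball_subset (mem_ball_zero_iff.2 (norm_le.trans_lt (half_lt_self r_pos))) hf)
    fun A hA => exists_forall_lt_norm_of_monotone hA
  have : CompactSpace (Iic s) := isCompact_iff_compactSpace.1 (isCompact_Iic_nat_pi s)
  obtain ⟨lam, lam_finite, lam_ne_zero, map_le⟩ := exists_measure_map_le_of_dual_bound (π := π)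
    (δ := (r / 2) ^ 2 / 4) (q := fun i (t : Iic s) => q i t)
    (fun i => (hq i).comp continuous_subtype_val) (by positivity) fun h h_nonneg h_cover => by
      obtain ⟨m, φ, hφ, norm_sq_le⟩ := exists_mem_l2Cover_initialBox (π := π) hq h_nonneg
        fun t ht => h_cover ⟨t, ht⟩
      have := pow_lt_pow_left₀ (hs m φ hφ) (by positivity) two_ne_zero
      linarith
  refine ⟨lam.map Subtype.val, inferInstance, ?_, fun i => ?_⟩
  · rwa [Ne, Measure.map_eq_zero_iff measurable_subtype_coe.aemeasurable]
  · rw [Measure.map_map (hq i).measurable measurable_subtype_coe]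
    exact map_le i

/-- Kellerer's duality, in the form of the alternative between a nonzero measure with dominated
marginals and a polar set. -/
theorem exists_null_of_forall_map_le_eq_zero {ι E : Type*} [Finite ι] [TopologicalSpace E]
    [PseudoMetrizableSpace E] [SecondCountableTopology E] [MeasurableSpace E] [BorelSpace E]
    {π : Measure E} [IsFiniteMeasure π] {Z : Type*} [MeasurableSpace Z] [StandardBorelSpace Z]
    {q : ι → Z → E}
    (hq : ∀ i, Measurable (q i))
    (h : ∀ lam : Measure Z, IsFiniteMeasure lam → (∀ i, lam.map (q i) ≤ π) → lam = 0) :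
    ∃ N, MeasurableSet N ∧ π N = 0 ∧ ∀ z, ∃ i, q i z ∈ N := by
  cases nonempty_fintype ι
  rcases isEmpty_or_nonempty Z with hZ | hZ
  · exact ⟨∅, MeasurableSet.empty, measure_empty, hZ.elim⟩
  obtain ⟨f, f_measurable, f_surjective, qf_continuous⟩ :=
    exists_surjective_forall_continuous_comp hq
  have zero_mem : 0 ∈ l2Cover π (fun i => q i ∘ f) univ := by
    by_contra zero_notMem
    obtain ⟨lam, lam_finite, lam_ne_zero, map_le⟩ :=
      exists_measure_map_le_of_zero_notMem_l2Cover qf_continuous zero_notMem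
    refine lam_ne_zero ((Measure.map_eq_zero_iff f_measurable.aemeasurable).1 ?_)
    refine h _ inferInstance fun i => ?_
    rw [Measure.map_map (hq i) f_measurable]
    exact map_le i
  obtain ⟨N, N_measurable, hN, N_cover⟩ := exists_null_of_zero_mem_l2Cover zero_mem
  exact ⟨N, N_measurable, hN, f_surjective.forall.2 fun s => N_cover s (mem_univ s)⟩

end Kellerer

section DiscreteMeasure

open scoped NNReal

variable {ι E : Type*} [Fintype ι] [MeasurableSpace E]

/-- The finitely supported measure whose atoms are listed, with their masses, by `v`. Points may be
repeated and masses may vanish. -/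
def discreteMeasure (v : ι → E × ℝ≥0) : Measure E :=
  ∑ k, (v k).2 • Measure.dirac (v k).1

lemma measurable_discreteMeasure : Measurable (discreteMeasure (ι := ι) (E := E)) := by
  refine Measure.measurable_of_measurable_coe _ fun s hs => ?_
  simp only [discreteMeasure, Measure.finsetSum_apply, Measure.smul_apply,
    Measure.dirac_apply' _ hs, ENNReal.smul_def, smul_eq_mul]
  have measurable_indicator : Measurable (s.indicator (1 : E → ENNReal)) :=
    measurable_one.indicator hs
  exact Finset.measurable_fun_sum _ fun k _ => .mul (by fun_prop) <|
    measurable_indicator.comp (measurable_fst.comp (measurable_pi_apply k))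

instance (v : ι → E × ℝ≥0) : IsFiniteMeasure (discreteMeasure v) := by
  unfold discreteMeasure
  infer_instance

variable [MeasurableSingletonClass E]

lemma integral_discreteMeasure (v : ι → E × ℝ≥0) (f : E → ℝ) :
    ∫ x, f x ∂discreteMeasure v = ∑ k, (v k).2 * f (v k).1 := by
  rw [discreteMeasure, integral_finsetSum_measure]
  · simp only [integral_smul_nnreal_measure, integral_dirac, NNReal.smul_def, smul_eq_mul]
  · exact fun k _ => (integrable_dirac enorm_lt_top).smul_measure_nnreal

lemma ae_discreteMeasure_of_forall {v : ι → E × ℝ≥0} {p : E → Prop} (hp : ∀ k, p (v k).1) :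
    ∀ᵐ x ∂discreteMeasure v, p x := by
  rw [discreteMeasure, ae_finsetSum_measure_iff]
  refine fun k _ => Measure.ae_smul_measure ?_ _
  rw [ae_dirac_eq]
  exact hp k

lemma exists_discreteMeasure_eq {α : Measure E} [IsFiniteMeasure α] {S : Finset E}
    (hα : α (↑S : Set E)ᶜ = 0) :
    ∃ n, ∃ v : Fin n → E × ℝ≥0, (∀ k, (v k).1 ∈ S) ∧ discreteMeasure v = α := by
  let atom (k : Fin S.card) : S := S.equivFin.symm k
  refine ⟨S.card, fun k => (atom k, (α {(atom k).1}).toNNReal), fun k => (atom k).2, ?_⟩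
  have sum_atoms := Measure.ae_mem_finset_iff.1 (mem_ae_iff.2 hα)
  calc ∑ k, (α {(atom k).1}).toNNReal • Measure.dirac (atom k).1
    _ = ∑ x : S, (α {x.1}).toNNReal • Measure.dirac x.1 :=
      S.equivFin.symm.sum_comp fun x => (α {x.1}).toNNReal • Measure.dirac x.1
    _ = ∑ x : S, α {x.1} • Measure.dirac x.1 :=
      Finset.sum_congr rfl fun x _ =>
        congrArg (· • Measure.dirac x.1) (ENNReal.coe_toNNReal (measure_ne_top α {x.1}))
    _ = α := by rw [S.sum_coe_sort fun x => α {x} • Measure.dirac x, ← sum_atoms]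

end DiscreteMeasure

section MomentOptimality

open ProbabilityTheory Set
open scoped NNReal

/-- The points of the finite measure described by `v` lie in `{g ≤ R}`, and its masses are at most
`R`. -/
def IsBoundedConfiguration {E ι : Type*} (g : E → ℝ) (R : ℝ≥0) (v : ι → E × ℝ≥0) : Prop :=
  ∀ k, g (v k).1 ≤ R ∧ (v k).2 ≤ R

lemma exists_isBoundedConfiguration {E ι : Type*} [Finite ι] (g : E → ℝ) (v : ι → E × ℝ≥0) :
    ∃ R₀ : ℕ, ∀ R : ℕ, R₀ ≤ R → IsBoundedConfiguration g R v := by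
  obtain ⟨M, hM⟩ := (finite_range fun k => max (g (v k).1) (v k).2).bddAbove
  obtain ⟨R₀, hR₀⟩ := exists_nat_ge M
  refine ⟨R₀, fun R hR k => ?_⟩
  have max_le : max (g (v k).1) (v k).2 ≤ R :=
    (hM ⟨k, rfl⟩).trans (hR₀.trans (Nat.cast_le.2 hR))
  exact ⟨(le_max_left _ _).trans max_le, NNReal.coe_le_coe.1 ((le_max_right _ _).trans max_le)⟩

variable {E : Type*} [MeasurableSpace E] {F : Set (E → ℝ)} {g c : E → ℝ} {π : Measure E}

/-- The two measures integrate every function of `F` to the same value. -/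
def SameMoments (F : Set (E → ℝ)) (α α' : Measure E) : Prop :=
  ∀ f ∈ F, ∫ x, f x ∂α = ∫ x, f x ∂α'

/-- No part `ω` of `π` can be replaced by a cheaper measure with the same `F`-moments. Only measures
integrating the control function `g` are considered, so that all the integrals make sense as soon as
`g` dominates `c` and the members of `F`. -/
def IsMomentOptimal (F : Set (E → ℝ)) (g c : E → ℝ) (π : Measure E) : Prop :=
  ∀ ω ω' : Measure E, IsFiniteMeasure ω → IsFiniteMeasure ω' → ω ≤ π → Integrable g ω →
    Integrable g ω' → SameMoments F ω ω' → ∫ x, c x ∂ω ≤ ∫ x, c x ∂ω'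

variable {Z : Type*} [MeasurableSpace Z] {lam : Measure Z} {κ κ' : Kernel Z E}

lemma integral_kernel_bind {f : E → ℝ} (hf : Integrable f (κ ∘ₘ lam)) :
    ∫ x, f x ∂(κ ∘ₘ lam) = ∫ z, ∫ x, f x ∂κ z ∂lam := by
  rw [Measure.comp_eq_comp_const_apply] at hf ⊢
  exact Kernel.integral_comp hf

lemma integrable_integral_of_integrable_kernel_bind {f : E → ℝ} (hf : Integrable f (κ ∘ₘ lam)) :
    Integrable (fun z => ∫ x, f x ∂κ z) lam := by
  rw [Measure.comp_eq_comp_const_apply] at hf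
  simpa only [Kernel.const_apply] using hf.integral_comp

lemma integral_lt_integral_of_forall_lt {f f' : Z → ℝ} (hlam : lam ≠ 0) (hf : Integrable f lam)
    (hf' : Integrable f' lam) (hlt : ∀ z, f z < f' z) : ∫ z, f z ∂lam < ∫ z, f' z ∂lam := by
  rw [← sub_pos, ← integral_sub hf' hf,
    integral_pos_iff_support_of_nonneg (fun z => sub_nonneg.2 (hlt z).le) (hf'.sub hf)]
  have support_eq : Function.support (fun z => f' z - f z) = univ :=
    eq_univ_of_forall fun z => (sub_pos.2 (hlt z)).ne'
  rw [support_eq]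
  exact Measure.measure_univ_pos.2 hlam

lemma eq_zero_of_isMomentOptimal_of_kernel_bind_le [IsFiniteMeasure lam] [IsFiniteKernel κ]
    [IsFiniteKernel κ'] (hπ : IsMomentOptimal F g c π)
    (hF : ∀ f ∈ F, Measurable f ∧ ∀ x, |f x| ≤ g x) (hc : Measurable c) (hcg : ∀ x, |c x| ≤ g x)
    (hg : Integrable g (κ ∘ₘ lam)) (hg' : Integrable g (κ' ∘ₘ lam))
    (hmoments : ∀ z, SameMoments F (κ z) (κ' z)) (hlt : ∀ z, ∫ x, c x ∂κ' z < ∫ x, c x ∂κ z)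
    (hle : κ ∘ₘ lam ≤ π) : lam = 0 := by
  have integrable_of_le {f : E → ℝ} {ω : Measure E} (hω : Integrable g ω) (hf : Measurable f)
      (hfg : ∀ x, |f x| ≤ g x) : Integrable f ω :=
    hω.mono' hf.aestronglyMeasurable (ae_of_all _ hfg)
  have mixture_moments : SameMoments F (κ ∘ₘ lam) (κ' ∘ₘ lam) := fun f hf => by
    rw [integral_kernel_bind (integrable_of_le hg (hF f hf).1 (hF f hf).2),
      integral_kernel_bind (integrable_of_le hg' (hF f hf).1 (hF f hf).2)]
    simp only [hmoments _ f hf]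
  have cost_le := hπ _ _ inferInstance inferInstance hle hg hg' mixture_moments
  have hc_int := integrable_of_le hg hc hcg
  have hc_int' := integrable_of_le hg' hc hcg
  rw [integral_kernel_bind hc_int, integral_kernel_bind hc_int'] at cost_le
  by_contra hlam
  exact cost_le.not_gt (integral_lt_integral_of_forall_lt hlam
    (integrable_integral_of_integrable_kernel_bind hc_int')
    (integrable_integral_of_integrable_kernel_bind hc_int) hlt)

/-- The pairs of bounded configurations of which the second has the same moments as the first and a
smaller cost. -/
def improvableConfigurations (F : Set (E → ℝ)) (g c : E → ℝ) (ι ι' : Type*) [Fintype ι]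
    [Fintype ι'] (R : ℝ≥0) : Set ((ι → E × ℝ≥0) × (ι' → E × ℝ≥0)) :=
  {z | IsBoundedConfiguration g R z.1 ∧ IsBoundedConfiguration g R z.2 ∧
    SameMoments F (discreteMeasure z.1) (discreteMeasure z.2) ∧
    ∫ x, c x ∂discreteMeasure z.2 < ∫ x, c x ∂discreteMeasure z.1}

variable {ι ι' : Type*} [Fintype ι] [Fintype ι']

lemma measurableSet_isBoundedConfiguration {ι : Type*} [Countable ι] (hg : Measurable g) (R : ℝ≥0) :
    MeasurableSet {v : ι → E × ℝ≥0 | IsBoundedConfiguration g R v} := by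
  simp only [IsBoundedConfiguration, ofPred_forall, ofPred_and]
  exact .iInter fun k => .inter (measurableSet_le (by fun_prop) (by fun_prop))
    (measurableSet_le (by fun_prop) (by fun_prop))

lemma measurable_integral_discreteMeasure [MeasurableSingletonClass E] {f : E → ℝ}
    (hf : Measurable f) :
    Measurable fun v : ι → E × ℝ≥0 => ∫ x, f x ∂discreteMeasure v := by
  simp only [integral_discreteMeasure]
  fun_prop

lemma measurableSet_improvableConfigurations [MeasurableSingletonClass E] (hF : F.Countable)
    (hFm : ∀ f ∈ F, Measurable f) (hg : Measurable g) (hc : Measurable c) (R : ℝ≥0) :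
    MeasurableSet (improvableConfigurations F g c ι ι' R) := by
  have measurable_integral_fst {f : E → ℝ} (hf : Measurable f) :
      Measurable fun z : (ι → E × ℝ≥0) × (ι' → E × ℝ≥0) => ∫ x, f x ∂discreteMeasure z.1 :=
    (measurable_integral_discreteMeasure hf).comp measurable_fst
  have measurable_integral_snd {f : E → ℝ} (hf : Measurable f) :
      Measurable fun z : (ι → E × ℝ≥0) × (ι' → E × ℝ≥0) => ∫ x, f x ∂discreteMeasure z.2 :=
    (measurable_integral_discreteMeasure hf).comp measurable_snd
  have measurableSet_sameMoments : MeasurableSet {z : (ι → E × ℝ≥0) × (ι' → E × ℝ≥0) |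
      SameMoments F (discreteMeasure z.1) (discreteMeasure z.2)} := by
    simp only [SameMoments, ofPred_forall]
    exact .biInter hF fun f hf => measurableSet_eq_fun
      (measurable_integral_fst (hFm f hf)) (measurable_integral_snd (hFm f hf))
  exact .inter (measurable_fst (measurableSet_isBoundedConfiguration hg R)) <|
    .inter (measurable_snd (measurableSet_isBoundedConfiguration hg R)) <|
    measurableSet_sameMoments.inter <|
    measurableSet_lt (measurable_integral_snd hc) (measurable_integral_fst hc)

/-- A measurable family of configurations, as a kernel; mixing it against a measure on the
parameters assembles the configurations into one measure. -/
def discreteKernel (v : Z → ι → E × ℝ≥0) (hv : Measurable v) : Kernel Z E :=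
  ⟨fun z => discreteMeasure (v z), measurable_discreteMeasure.comp hv⟩

variable {v : Z → ι → E × ℝ≥0} {R : ℝ≥0}

lemma isFiniteKernel_discreteKernel (hv : Measurable v)
    (hR : ∀ z, IsBoundedConfiguration g R (v z)) : IsFiniteKernel (discreteKernel v hv) := by
  refine ⟨Fintype.card ι * R, by finiteness, fun z => ?_⟩
  calc discreteMeasure (v z) univ
    _ = ∑ k, ((v z k).2 : ENNReal) := by
      simp [discreteMeasure, Measure.finsetSum_apply]
    _ ≤ ∑ _ : ι, (R : ENNReal) :=
      Finset.sum_le_sum fun k _ => ENNReal.coe_le_coe.2 (hR z k).2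
    _ = Fintype.card ι * R := by simp

lemma integrable_discreteKernel_bind [MeasurableSingletonClass E] [IsFiniteMeasure lam]
    (hv : Measurable v) (hR : ∀ z, IsBoundedConfiguration g R (v z)) (hg : Measurable g)
    (hg_nonneg : ∀ x, 0 ≤ g x) : Integrable g (discreteKernel v hv ∘ₘ lam) := by
  have := isFiniteKernel_discreteKernel hv hR
  refine .of_bound hg.aestronglyMeasurable R <| Measure.ae_comp_of_ae_ae
    (measurableSet_le (by fun_prop) (by fun_prop)) <| ae_of_all _ fun z =>
    ae_discreteMeasure_of_forall fun k => ?_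
  rw [Real.norm_of_nonneg (hg_nonneg _)]
  exact (hR z k).1

lemma discreteKernel_bind_le (hv : Measurable v) (hR : ∀ z k, (v z k).2 ≤ R) {ε : ℝ≥0}
    (hε : Fintype.card ι * R * ε ≤ 1) (hle : ∀ k, lam.map (fun z => (v z k).1) ≤ ε • π) :
    discreteKernel v hv ∘ₘ lam ≤ π := by
  have measurable_point (k : ι) : Measurable fun z => (v z k).1 := by fun_prop
  refine Measure.le_iff.2 fun s hs => ?_
  calc (discreteKernel v hv ∘ₘ lam) s
    _ = ∫⁻ z, ∑ k, (v z k).2 * s.indicator 1 (v z k).1 ∂lam := by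
      rw [Measure.bind_apply hs (Kernel.aemeasurable _)]
      simp only [discreteKernel, Kernel.coe_mk, discreteMeasure, Measure.finsetSum_apply,
        Measure.smul_apply, Measure.dirac_apply' _ hs, ENNReal.smul_def, smul_eq_mul]
    _ ≤ ∫⁻ z, ∑ k, R * ((fun z => (v z k).1) ⁻¹' s).indicator 1 z ∂lam :=
      lintegral_mono fun z => Finset.sum_le_sum fun k _ =>
        mul_le_mul_left (ENNReal.coe_le_coe.2 (hR z k)) _
    _ = ∑ k, R * lam.map (fun z => (v z k).1) s := by
      rw [lintegral_finsetSum _ fun k _ =>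
        (measurable_one.indicator (measurable_point k hs)).const_mul _]
      refine Finset.sum_congr rfl fun k _ => ?_
      rw [lintegral_const_mul _ (measurable_one.indicator (measurable_point k hs)),
        lintegral_indicator_one (measurable_point k hs), Measure.map_apply (measurable_point k) hs]
    _ ≤ ∑ _ : ι, R * (ε • π) s := Finset.sum_le_sum fun k _ => mul_le_mul_right (hle k s) _
    _ = (Fintype.card ι * R * ε : ℝ≥0) * π s := by
      simp [mul_assoc]
    _ ≤ π s := mul_le_of_le_one_left' (ENNReal.coe_le_one_iff.2 hε)

lemma exists_null_of_isMomentOptimal [StandardBorelSpace E] [IsFiniteMeasure π]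
    (hπ : IsMomentOptimal F g c π) (hF : F.Countable)
    (hFg : ∀ f ∈ F, Measurable f ∧ ∀ x, |f x| ≤ g x) (hg : Measurable g) (hc : Measurable c)
    (hcg : ∀ x, |c x| ≤ g x) (ι ι' : Type*) [Fintype ι] [Fintype ι'] (R : ℝ≥0) :
    ∃ N, MeasurableSet N ∧ π N = 0 ∧
      ∀ z ∈ improvableConfigurations F g c ι ι' R, ∃ k, (z.1 k).1 ∈ N := by
  let := upgradeStandardBorel E
  let ε : ℝ≥0 := (Fintype.card ι * R + 1)⁻¹
  have hε : Fintype.card ι * R * ε ≤ 1 := mul_inv_le_one_of_le₀ le_self_add zero_le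
  have := (measurableSet_improvableConfigurations (ι := ι) (ι' := ι') hF (fun f hf => (hFg f hf).1)
    hg hc R).standardBorel
  have g_nonneg (x : E) : 0 ≤ g x := (abs_nonneg _).trans (hcg x)
  obtain ⟨N, N_measurable, hN, N_meets⟩ := exists_null_of_forall_map_le_eq_zero (π := ε • π)
    (q := fun k (z : improvableConfigurations F g c ι ι' R) => (z.1.1 k).1) (by fun_prop)
    fun lam lam_finite hle => by
      have hv : Measurable fun z : improvableConfigurations F g c ι ι' R => z.1.1 := by fun_prop
      have hv' : Measurable fun z : improvableConfigurations F g c ι ι' R => z.1.2 := by fun_prop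
      have := isFiniteKernel_discreteKernel hv fun z => z.2.1
      have := isFiniteKernel_discreteKernel hv' fun z => z.2.2.1
      exact eq_zero_of_isMomentOptimal_of_kernel_bind_le hπ hFg hc hcg
        (integrable_discreteKernel_bind hv (fun z => z.2.1) hg g_nonneg)
        (integrable_discreteKernel_bind hv' (fun z => z.2.2.1) hg g_nonneg)
        (fun z => z.2.2.2.1) (fun z => z.2.2.2.2)
        (discreteKernel_bind_le hv (fun z k => (z.2.1 k).2) hε hle)
  have ε_ne_zero : ε ≠ 0 := by positivity
  refine ⟨N, N_measurable, ?_, fun z hz => N_meets ⟨z, hz⟩⟩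
  simpa [ε_ne_zero] using hN

theorem exists_monotone_of_isMomentOptimal [StandardBorelSpace E] [IsFiniteMeasure π]
    (hπ : IsMomentOptimal F g c π) (hF : F.Countable)
    (hFg : ∀ f ∈ F, Measurable f ∧ ∀ x, |f x| ≤ g x) (hg : Measurable g) (hc : Measurable c)
    (hcg : ∀ x, |c x| ≤ g x) :
    ∃ Γ, MeasurableSet Γ ∧ π Γᶜ = 0 ∧ ∀ α α' : Measure E, IsFiniteMeasure α → IsFiniteMeasure α' →
      (∃ S : Finset E, ↑S ⊆ Γ ∧ α (↑S : Set E)ᶜ = 0) → (∃ S : Finset E, α' (↑S : Set E)ᶜ = 0) →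
      SameMoments F α α' → ∫ x, c x ∂α ≤ ∫ x, c x ∂α' := by
  choose N N_measurable hN N_meets using fun n m R : ℕ =>
    exists_null_of_isMomentOptimal hπ hF hFg hg hc hcg (Fin n) (Fin m) R
  refine ⟨(⋃ n, ⋃ m, ⋃ R, N n m R)ᶜ, ?_, ?_, ?_⟩
  · exact (MeasurableSet.iUnion fun n => .iUnion fun m => .iUnion fun R =>
      N_measurable n m R).compl
  · simp only [compl_compl, measure_iUnion_null_iff]
    exact hN
  rintro α α' α_finite α'_finite ⟨S, hSΓ, hS⟩ ⟨S', hS'⟩ hmoments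
  obtain ⟨n, v, v_mem, rfl⟩ := exists_discreteMeasure_eq hS
  obtain ⟨m, v', -, rfl⟩ := exists_discreteMeasure_eq hS'
  obtain ⟨R, hR⟩ := exists_isBoundedConfiguration g v
  obtain ⟨R', hR'⟩ := exists_isBoundedConfiguration g v'
  by_contra! hlt
  obtain ⟨k, hk⟩ := N_meets n m (max R R') (v, v')
    ⟨hR _ (le_max_left _ _), hR' _ (le_max_right _ _), hmoments, hlt⟩
  exact hSΓ (v_mem k) (mem_iUnion.2 ⟨n, mem_iUnion.2 ⟨m, mem_iUnion.2 ⟨_, hk⟩⟩⟩)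

end MomentOptimality

section IntervalMoments

open Set

variable {Ω : Type*} {X Y : Ω → ℝ}

/-- The functions `p ↦ 1_{(a, b)}(X p) * Y p` with `a` and `b` rational. Their integrals determine
the law of `X` weighted by `Y`. -/
def intervalMoments (X Y : Ω → ℝ) : Set (Ω → ℝ) :=
  range fun (q : ℚ × ℚ) p => (Ioo (q.1 : ℝ) q.2).indicator 1 (X p) * Y p

lemma countable_intervalMoments : (intervalMoments X Y).Countable :=
  countable_range _

lemma abs_le_of_mem_intervalMoments {f : Ω → ℝ} (hf : f ∈ intervalMoments X Y) (p : Ω) :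
    |f p| ≤ |Y p| := by
  obtain ⟨q, rfl⟩ := hf
  by_cases hp : X p ∈ Ioo (q.1 : ℝ) q.2 <;> simp [hp]

variable [MeasurableSpace Ω] {ω ω' : Measure Ω}

lemma measurable_of_mem_intervalMoments (hX : Measurable X) (hY : Measurable Y) {f : Ω → ℝ}
    (hf : f ∈ intervalMoments X Y) : Measurable f := by
  obtain ⟨q, rfl⟩ := hf
  exact ((measurable_one.indicator measurableSet_Ioo).comp hX).mul hY

/-- The law of `X` under the measure with density `max Y 0`. -/
def weightedLaw (X Y : Ω → ℝ) (ω : Measure Ω) : Measure ℝ :=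
  (ω.withDensity fun p => ENNReal.ofReal (Y p)).map X

lemma isFiniteMeasure_weightedLaw (hY : Integrable Y ω) : IsFiniteMeasure (weightedLaw X Y ω) := by
  have := isFiniteMeasure_withDensity_ofReal hY.2
  unfold weightedLaw
  infer_instance

lemma integral_weightedLaw_sub_neg (hX : Measurable X) (hYm : Measurable Y) (hY : Integrable Y ω)
    {h : ℝ → ℝ} (hh : Measurable h) {C : ℝ} (hC : ∀ x, |h x| ≤ C) :
    ∫ x, h x ∂weightedLaw X Y ω - ∫ x, h x ∂weightedLaw X (-Y) ω = ∫ p, h (X p) * Y p ∂ω := by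
  have integral_weightedLaw {W : Ω → ℝ} (hW : Measurable W) :
      ∫ x, h x ∂weightedLaw X W ω = ∫ p, max (W p) 0 * h (X p) ∂ω := by
    rw [weightedLaw, integral_map hX.aemeasurable hh.aestronglyMeasurable,
      integral_withDensity_eq_integral_toReal_smul hW.ennreal_ofReal
        (ae_of_all _ fun p => ENNReal.ofReal_lt_top)]
    simp only [ENNReal.toReal_ofReal', smul_eq_mul]
  have integrable_part {W : Ω → ℝ} (hW : Integrable W ω) :
      Integrable (fun p => max (W p) 0 * h (X p)) ω :=
    hW.pos_part.mul_bdd (hh.comp hX).aestronglyMeasurable (ae_of_all _ fun p => hC (X p))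
  rw [integral_weightedLaw hYm, integral_weightedLaw hYm.neg,
    ← integral_sub (integrable_part hY) (integrable_part hY.neg)]
  refine integral_congr_ae (ae_of_all _ fun p => ?_)
  simp only [Pi.neg_apply]
  rw [← sub_mul, max_zero_sub_eq_self, mul_comm]

lemma integral_comp_mul_eq_of_sameMoments (hX : Measurable X) (hYm : Measurable Y)
    (hY : Integrable Y ω) (hY' : Integrable Y ω')
    (hmoments : SameMoments (intervalMoments X Y) ω ω') {h : ℝ → ℝ} (hh : Measurable h) {C : ℝ}
    (hC : ∀ x, |h x| ≤ C) : ∫ p, h (X p) * Y p ∂ω = ∫ p, h (X p) * Y p ∂ω' := by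
  have := isFiniteMeasure_weightedLaw (X := X) hY
  have := isFiniteMeasure_weightedLaw (X := X) hY'
  have := isFiniteMeasure_weightedLaw (X := X) hY.neg
  have := isFiniteMeasure_weightedLaw (X := X) hY'.neg
  let m := weightedLaw X Y ω + weightedLaw X (-Y) ω'
  let m' := weightedLaw X Y ω' + weightedLaw X (-Y) ω
  have integral_sub_integral {φ : ℝ → ℝ} (hφ : Measurable φ) {D : ℝ} (hD : ∀ x, |φ x| ≤ D) :
      ∫ x, φ x ∂m - ∫ x, φ x ∂m' = ∫ p, φ (X p) * Y p ∂ω - ∫ p, φ (X p) * Y p ∂ω' := by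
    have integrable_φ (ρ : Measure ℝ) [IsFiniteMeasure ρ] : Integrable φ ρ :=
      .of_bound hφ.aestronglyMeasurable D (ae_of_all _ hD)
    rw [integral_add_measure (integrable_φ _) (integrable_φ _),
      integral_add_measure (integrable_φ _) (integrable_φ _),
      ← integral_weightedLaw_sub_neg hX hYm hY hφ hD,
      ← integral_weightedLaw_sub_neg hX hYm hY' hφ hD]
    ring
  have m_eq : m = m' := by
    refine Real.measure_ext_Ioo_rat fun a b => ?_
    have integral_Ioo_sub := integral_sub_integral (D := 1)
      (measurable_one.indicator (measurableSet_Ioo (a := (a : ℝ)) (b := b))) fun x => by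
        by_cases hx : x ∈ Ioo (a : ℝ) b <;> simp [hx]
    rw [hmoments _ ⟨(a, b), rfl⟩, sub_self, integral_indicator_one measurableSet_Ioo,
      integral_indicator_one measurableSet_Ioo, sub_eq_zero] at integral_Ioo_sub
    exact (measureReal_eq_measureReal_iff (measure_ne_top _ _) (measure_ne_top _ _)).1
      integral_Ioo_sub
  rw [← sub_eq_zero, ← integral_sub_integral hh hC, m_eq, sub_self]

lemma map_eq_map_of_sameMoments [IsFiniteMeasure ω] [IsFiniteMeasure ω'] (hX : Measurable X)
    (hmoments : SameMoments (intervalMoments X 1) ω ω') : ω.map X = ω'.map X := by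
  refine Real.measure_ext_Ioo_rat fun a b => ?_
  have integral_eq := hmoments _ ⟨(a, b), rfl⟩
  simp only [Pi.one_apply, mul_one] at integral_eq
  rw [← integral_map hX.aemeasurable, ← integral_map hX.aemeasurable,
    integral_indicator_one measurableSet_Ioo, integral_indicator_one measurableSet_Ioo]
    at integral_eq
  · exact (measureReal_eq_measureReal_iff (measure_ne_top _ _) (measure_ne_top _ _)).1 integral_eq
  all_goals exact (measurable_one.indicator measurableSet_Ioo).aestronglyMeasurable

lemma sameMoments_of_map_eq_map (hX : Measurable X) (hmap : ω.map X = ω'.map X) :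
    SameMoments (intervalMoments X 1) ω ω' := by
  rintro _ ⟨⟨a, b⟩, rfl⟩
  have measurable_indicator : Measurable ((Ioo (a : ℝ) b).indicator (1 : ℝ → ℝ)) :=
    measurable_one.indicator measurableSet_Ioo
  simp only [Pi.one_apply, mul_one]
  rw [← integral_map hX.aemeasurable measurable_indicator.aestronglyMeasurable, hmap,
    integral_map hX.aemeasurable measurable_indicator.aestronglyMeasurable]

end IntervalMoments

section MartingaleOptimality

open Set

variable {μ ν : Measure ℝ} {π ω ω' : Measure (ℝ × ℝ)}

/-- Countably many functions whose integrals determine both marginals of a measure on the plane and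
its barycenters along the fibers of the first coordinate. -/
def martingaleMoments : Set (ℝ × ℝ → ℝ) :=
  intervalMoments Prod.fst 1 ∪ intervalMoments Prod.snd 1 ∪ intervalMoments Prod.fst Prod.snd

/-- A common bound for `martingaleMoments`, the two coordinates and the cost `c`. -/
def martingaleControl (c : ℝ × ℝ → ℝ) (p : ℝ × ℝ) : ℝ :=
  1 + |p.1| + |p.2| + |c p|

lemma countable_martingaleMoments : martingaleMoments.Countable :=
  (countable_intervalMoments.union countable_intervalMoments).union countable_intervalMoments

lemma abs_le_martingaleControl (c : ℝ × ℝ → ℝ) (p : ℝ × ℝ) : |c p| ≤ martingaleControl c p := by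
  rw [martingaleControl]
  linarith [abs_nonneg p.1, abs_nonneg p.2]

lemma measurable_and_abs_le_of_mem_martingaleMoments (c : ℝ × ℝ → ℝ) {f : ℝ × ℝ → ℝ}
    (hf : f ∈ martingaleMoments) : Measurable f ∧ ∀ p, |f p| ≤ martingaleControl c p := by
  have one_le (p : ℝ × ℝ) : |(1 : ℝ × ℝ → ℝ) p| ≤ martingaleControl c p := by
    rw [Pi.one_apply, abs_one, martingaleControl]
    linarith [abs_nonneg p.1, abs_nonneg p.2, abs_nonneg (c p)]
  have snd_le (p : ℝ × ℝ) : |p.2| ≤ martingaleControl c p := by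
    rw [martingaleControl]
    linarith [abs_nonneg p.1, abs_nonneg (c p)]
  rcases hf with (hf | hf) | hf
  · exact ⟨measurable_of_mem_intervalMoments measurable_fst measurable_one hf, fun p =>
      (abs_le_of_mem_intervalMoments hf p).trans (one_le p)⟩
  · exact ⟨measurable_of_mem_intervalMoments measurable_snd measurable_one hf, fun p =>
      (abs_le_of_mem_intervalMoments hf p).trans (one_le p)⟩
  · exact ⟨measurable_of_mem_intervalMoments measurable_fst measurable_snd hf, fun p =>
      (abs_le_of_mem_intervalMoments hf p).trans (snd_le p)⟩

lemma integrable_mul_sub (fst_integrable : Integrable Prod.fst ω)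
    (snd_integrable : Integrable Prod.snd ω) {h : ℝ → ℝ} (hh : Measurable h) {C : ℝ}
    (hC : ∀ x, |h x| ≤ C) : Integrable (fun p : ℝ × ℝ => h p.1 * (p.2 - p.1)) ω :=
  (snd_integrable.sub fst_integrable).bdd_mul (hh.comp measurable_fst).aestronglyMeasurable
    (ae_of_all _ fun p => hC p.1)

lemma map_fst_and_map_snd_eq_of_sameMoments [IsFiniteMeasure ω] [IsFiniteMeasure ω']
    (hmoments : SameMoments martingaleMoments ω ω') :
    ω.map Prod.fst = ω'.map Prod.fst ∧ ω.map Prod.snd = ω'.map Prod.snd :=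
  ⟨map_eq_map_of_sameMoments measurable_fst fun f hf => hmoments f (.inl (.inl hf)),
    map_eq_map_of_sameMoments measurable_snd fun f hf => hmoments f (.inl (.inr hf))⟩

lemma integral_mul_sub_eq_of_sameMoments [IsFiniteMeasure ω] [IsFiniteMeasure ω']
    (fst_integrable : Integrable Prod.fst ω) (fst_integrable' : Integrable Prod.fst ω')
    (snd_integrable : Integrable Prod.snd ω) (snd_integrable' : Integrable Prod.snd ω')
    (hmoments : SameMoments martingaleMoments ω ω') {h : ℝ → ℝ} (hh : Measurable h) {C : ℝ}
    (hC : ∀ x, |h x| ≤ C) :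
    ∫ p : ℝ × ℝ, h p.1 * (p.2 - p.1) ∂ω = ∫ p : ℝ × ℝ, h p.1 * (p.2 - p.1) ∂ω' := by
  have integral_mul_snd_eq : ∫ p : ℝ × ℝ, h p.1 * p.2 ∂ω = ∫ p : ℝ × ℝ, h p.1 * p.2 ∂ω' :=
    integral_comp_mul_eq_of_sameMoments measurable_fst measurable_snd snd_integrable
      snd_integrable' (fun f hf => hmoments f (.inr hf)) hh hC
  have integral_mul_fst_eq : ∫ p : ℝ × ℝ, h p.1 * p.1 ∂ω = ∫ p : ℝ × ℝ, h p.1 * p.1 ∂ω' := by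
    have measurable_mul : Measurable fun x => h x * x := by fun_prop
    rw [← integral_map (f := fun x => h x * x) measurable_fst.aemeasurable
      measurable_mul.aestronglyMeasurable, (map_fst_and_map_snd_eq_of_sameMoments hmoments).1,
      integral_map measurable_fst.aemeasurable measurable_mul.aestronglyMeasurable]
  have integrable_mul {ρ : Measure (ℝ × ℝ)} {W : ℝ × ℝ → ℝ} (hW : Integrable W ρ) :
      Integrable (fun p => h p.1 * W p) ρ :=
    hW.bdd_mul (hh.comp measurable_fst).aestronglyMeasurable (ae_of_all _ fun p => hC p.1)
  simp only [mul_sub]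
  rw [integral_sub (integrable_mul snd_integrable) (integrable_mul fst_integrable),
    integral_sub (integrable_mul snd_integrable') (integrable_mul fst_integrable'),
    integral_mul_snd_eq, integral_mul_fst_eq]

lemma isMartingaleCoupling_sub_add [IsFiniteMeasure ω] [IsFiniteMeasure ω']
    (hπ : IsMartingaleCoupling μ ν π) (hle : ω ≤ π)
    (fst_integrable : Integrable Prod.fst ω) (fst_integrable' : Integrable Prod.fst ω')
    (snd_integrable : Integrable Prod.snd ω) (snd_integrable' : Integrable Prod.snd ω')
    (hmoments : SameMoments martingaleMoments ω ω') : IsMartingaleCoupling μ ν (π - ω + ω') := by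
  obtain ⟨π_prob, map_fst, map_snd, integral_eq_zero⟩ := hπ
  obtain ⟨map_fst_eq, map_snd_eq⟩ := map_fst_and_map_snd_eq_of_sameMoments hmoments
  have sub_add : π - ω + ω = π := Measure.sub_add_cancel_of_le hle
  have map_fst' : (π - ω + ω').map Prod.fst = μ := by
    rw [Measure.map_add _ _ measurable_fst, ← map_fst_eq, ← Measure.map_add _ _ measurable_fst,
      sub_add, map_fst]
  have map_snd' : (π - ω + ω').map Prod.snd = ν := by
    rw [Measure.map_add _ _ measurable_snd, ← map_snd_eq, ← Measure.map_add _ _ measurable_snd,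
      sub_add, map_snd]
  refine ⟨?_, map_fst', map_snd', fun h hh ⟨C, hC⟩ => ?_⟩
  · rw [← Measure.isProbabilityMeasure_map_iff measurable_fst.aemeasurable, map_fst', ← map_fst]
    exact Measure.isProbabilityMeasure_map measurable_fst.aemeasurable
  · have integrable := integrable_mul_sub fst_integrable snd_integrable hh hC
    have integrable' := integrable_mul_sub fst_integrable' snd_integrable' hh hC
    -- A coupling need not integrate the test function; its integral is then `0` by convention.
    by_cases h_sub : Integrable (fun p : ℝ × ℝ => h p.1 * (p.2 - p.1)) (π - ω)
    · rw [integral_add_measure h_sub integrable', ← integral_mul_sub_eq_of_sameMoments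
        fst_integrable fst_integrable' snd_integrable snd_integrable' hmoments hh hC,
        ← integral_add_measure h_sub integrable, sub_add]
      exact integral_eq_zero h hh ⟨C, hC⟩
    · exact integral_undef fun h_add => h_sub (integrable_add_measure.1 h_add).1

lemma isMomentOptimal_of_isMartingaleCoupling {c : ℝ × ℝ → ℝ} (hc : Measurable c)
    (hπ : IsMartingaleCoupling μ ν π) (hfin : Integrable c π)
    (hmin : ∀ π', IsMartingaleCoupling μ ν π' → Integrable c π' → ∫ p, c p ∂π ≤ ∫ p, c p ∂π') :
    IsMomentOptimal martingaleMoments (martingaleControl c) c π := by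
  intro ω ω' ω_finite ω'_finite hle hg hg' hmoments
  have integrable_of_control {ρ : Measure (ℝ × ℝ)} (hρ : Integrable (martingaleControl c) ρ) :
      Integrable Prod.fst ρ ∧ Integrable Prod.snd ρ ∧ Integrable c ρ := by
    refine ⟨hρ.mono' measurable_fst.aestronglyMeasurable (ae_of_all _ fun p => ?_),
      hρ.mono' measurable_snd.aestronglyMeasurable (ae_of_all _ fun p => ?_),
      hρ.mono' hc.aestronglyMeasurable (ae_of_all _ fun p => ?_)⟩ <;>
    rw [Real.norm_eq_abs, martingaleControl] <;>
    linarith [abs_nonneg p.1, abs_nonneg p.2, abs_nonneg (c p)]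
  obtain ⟨fst_integrable, snd_integrable, c_integrable⟩ := integrable_of_control hg
  obtain ⟨fst_integrable', snd_integrable', c_integrable'⟩ := integrable_of_control hg'
  have := hπ.1
  have sub_add : π - ω + ω = π := Measure.sub_add_cancel_of_le hle
  have c_integrable_sub : Integrable c (π - ω) := hfin.mono_measure Measure.sub_le
  have integral_le := hmin (π - ω + ω')
    (isMartingaleCoupling_sub_add hπ hle fst_integrable fst_integrable' snd_integrable
      snd_integrable' hmoments) (c_integrable_sub.add_measure c_integrable')
  nth_rw 1 [← sub_add] at integral_le
  rw [integral_add_measure c_integrable_sub c_integrable,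
    integral_add_measure c_integrable_sub c_integrable'] at integral_le
  exact le_of_add_le_add_left integral_le

lemma integral_mul_snd_eq_sum_fiber {α : Measure (ℝ × ℝ)} [IsFiniteMeasure α]
    {S : Finset (ℝ × ℝ)} (hS : α (↑S : Set (ℝ × ℝ))ᶜ = 0) {T : Finset ℝ}
    (hST : ∀ p ∈ S, p.1 ∈ T) (φ : ℝ → ℝ) :
    ∫ p, φ p.1 * p.2 ∂α = ∑ x ∈ T, φ x * ∫ p in {p : ℝ × ℝ | p.1 = x}, p.2 ∂α := by
  have measurableSet_fiber (x : ℝ) : MeasurableSet {p : ℝ × ℝ | p.1 = x} :=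
    measurable_fst (measurableSet_singleton x)
  have restrict_support : α.restrict S = α := Measure.restrict_eq_self_of_ae_mem hS
  have restrict_fibers : α.restrict (⋃ x ∈ T, {p : ℝ × ℝ | p.1 = x}) = α :=
    Measure.restrict_eq_self_of_ae_mem <| (show ∀ᵐ p ∂α, p ∈ (S : Set (ℝ × ℝ)) from hS).mono
      fun p hp => mem_biUnion (hST p hp) rfl
  have integrable_moment : Integrable (fun p : ℝ × ℝ => φ p.1 * p.2) α := by
    rw [← restrict_support]
    exact IntegrableOn.finset
  conv_lhs => rw [← restrict_fibers]
  rw [integral_biUnion_finset T (fun x _ => measurableSet_fiber x)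
    (fun x _ y _ hxy => disjoint_left.2 fun p hx hy => hxy (hx.symm.trans hy))
    fun x _ => integrable_moment.integrableOn]
  refine Finset.sum_congr rfl fun x _ => ?_
  rw [← integral_const_mul]
  exact setIntegral_congr_fun (measurableSet_fiber x) fun p hp => by
    simp only [mem_ofPred_eq ▸ hp]

lemma IsCompetitor.isFiniteMeasure {α α' : Measure (ℝ × ℝ)} [IsFiniteMeasure α]
    (h : IsCompetitor α α') : IsFiniteMeasure α' := by
  refine ⟨?_⟩
  rw [← preimage_univ (f := Prod.fst), ← Measure.map_apply measurable_fst .univ, h.2.1]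
  exact measure_lt_top _ _

lemma IsCompetitor.sameMoments {α α' : Measure (ℝ × ℝ)} [IsFiniteMeasure α] {S : Finset (ℝ × ℝ)}
    (hS : α (↑S : Set (ℝ × ℝ))ᶜ = 0) (h : IsCompetitor α α') :
    SameMoments martingaleMoments α α' := by
  have := h.isFiniteMeasure
  obtain ⟨⟨S', hS'⟩, map_fst_eq, map_snd_eq, barycenter_eq⟩ := h
  rintro f ((hf | hf) | hf)
  · exact sameMoments_of_map_eq_map measurable_fst map_fst_eq.symm f hf
  · exact sameMoments_of_map_eq_map measurable_snd map_snd_eq.symm f hf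
  · obtain ⟨⟨a, b⟩, rfl⟩ := hf
    have mem_image (p : ℝ × ℝ) (hp : p ∈ S ∪ S') : p.1 ∈ (S ∪ S').image Prod.fst :=
      Finset.mem_image_of_mem Prod.fst hp
    rw [integral_mul_snd_eq_sum_fiber hS fun p hp => mem_image p (Finset.mem_union_left S' hp),
      integral_mul_snd_eq_sum_fiber hS' fun p hp => mem_image p (Finset.mem_union_right S hp)]
    simp only [barycenter_eq]

end MartingaleOptimality

theorem variational_lemma_general {μ ν : Measure ℝ} {c : ℝ → ℝ → ℝ}
    (hc : Measurable (fun p : ℝ × ℝ => c p.1 p.2)) {π : Measure (ℝ × ℝ)}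
    (hπ : IsMartingaleCoupling μ ν π) (hfin : Integrable (fun p : ℝ × ℝ => c p.1 p.2) π)
    (hmin : ∀ π' : Measure (ℝ × ℝ), IsMartingaleCoupling μ ν π' →
      Integrable (fun p : ℝ × ℝ => c p.1 p.2) π' →
      ∫ p : ℝ × ℝ, c p.1 p.2 ∂π ≤ ∫ p : ℝ × ℝ, c p.1 p.2 ∂π') :
    ∃ Γ : Set (ℝ × ℝ), MeasurableSet Γ ∧ π Γ = 1 ∧
      ∀ α : Measure (ℝ × ℝ), IsFiniteMeasure α → HasFiniteSupportIn α Γ →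
        ∀ α' : Measure (ℝ × ℝ), IsCompetitor α α' →
          ∫ p : ℝ × ℝ, c p.1 p.2 ∂α ≤ ∫ p : ℝ × ℝ, c p.1 p.2 ∂α' := by
  have := hπ.1
  have control_measurable : Measurable (martingaleControl fun p => c p.1 p.2) := by
    unfold martingaleControl
    fun_prop
  obtain ⟨Γ, Γ_measurable, hΓ, cost_le⟩ := exists_monotone_of_isMomentOptimal
    (isMomentOptimal_of_isMartingaleCoupling hc hπ hfin hmin) countable_martingaleMoments
    (fun _ => measurable_and_abs_le_of_mem_martingaleMoments _) control_measurable hc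
    (abs_le_martingaleControl _)
  refine ⟨Γ, Γ_measurable, (prob_compl_eq_zero_iff Γ_measurable).1 hΓ, ?_⟩
  intro α α_finite α_support α' hα'
  have ⟨S, _, hS⟩ := α_support
  exact cost_le α α' α_finite hα'.isFiniteMeasure α_support hα'.1 (hα'.sameMoments hS)

/-- Variational Lemma: a minimising martingale transport plan with finite cost is
concentrated on a Borel set `Γ` on which no finite rearrangement of mass
(competitor) can decrease the cost. -/
theorem variational_lemma
    (μ ν : Measure ℝ) [IsProbabilityMeasure μ] [IsProbabilityMeasure ν]
    (hconv : InConvexOrder μ ν)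
    (c : ℝ → ℝ → ℝ) (hc : Measurable (fun p : ℝ × ℝ => c p.1 p.2))
    (a b : ℝ → ℝ) (ha : Integrable a μ) (hb : Integrable b ν)
    (hbound : ∀ x y : ℝ, a x + b y ≤ c x y)
    (π : Measure (ℝ × ℝ)) (hπ : IsMartingaleCoupling μ ν π)
    (hfin : Integrable (fun p : ℝ × ℝ => c p.1 p.2) π)
    (hmin : ∀ π' : Measure (ℝ × ℝ), IsMartingaleCoupling μ ν π' →
      Integrable (fun p : ℝ × ℝ => c p.1 p.2) π' →
      ∫ p : ℝ × ℝ, c p.1 p.2 ∂π ≤ ∫ p : ℝ × ℝ, c p.1 p.2 ∂π') :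
    ∃ Γ : Set (ℝ × ℝ), MeasurableSet Γ ∧ π Γ = 1 ∧
      ∀ α : Measure (ℝ × ℝ), IsFiniteMeasure α → HasFiniteSupportIn α Γ →
        ∀ α' : Measure (ℝ × ℝ), IsCompetitor α α' →
          ∫ p : ℝ × ℝ, c p.1 p.2 ∂α ≤ ∫ p : ℝ × ℝ, c p.1 p.2 ∂α' := by
  exact variational_lemma_general hc hπ hfin hmin
end
end

section
/- Let k be a positive integer and Γ ⊆ ℝ². For a ∈ ℝ set Γ_a := {b ∈ ℝ : (a,b) ∈ Γ}, and assume there are uncountably many a ∈ ℝ with |Γ_a| ≥ k. Then there exist a ∈ ℝ and b₁ < b₂ < ⋯ < b_k in Γ_a such that for every ε > 0: (1) there exist a' > a and b₁' < ⋯ < b_k' in Γ_{a'} with max(|a−a'|, |b₁−b₁'|, …, |b_k−b_k'|) < ε, and (2) there exist a'' < a and b₁'' < ⋯ < b_k'' in Γ_{a''} with max(|a−a''|, |b₁−b₁''|, …, |b_k−b_k''|) < ε. -/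
/-!
Call a point `p` of a set `T` in a second-countable space bad on the right for a function `g` if
`p` is not in the closure of the points of `T` with a larger value of `g`.
Then some basic open set `U` around `p` witnesses this, and `g p` is the greatest value of `g` on
`T ∩ U`; since `U` determines this value, the bad points take only countably many values. With the
same count on the left, if `g` takes uncountably many values on `T` then some point of `T` is bad
on neither side. For sections, `T` is the set of pairs `(a, b)` with `b₁ < ⋯ < b_k` in `Γ_a`, and
`g (a, b) = a`.
-/

open Set Topology

section Accumulation

variable {X α : Type*} [TopologicalSpace X] [SecondCountableTopology X] [LinearOrder α]

theorem countable_image_notMem_closure_gt (T : Set X) (g : X → α) :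
    (g '' {p ∈ T | p ∉ closure {q ∈ T | g p < g q}}).Countable := by
  let B := TopologicalSpace.countableBasis X
  have hmaxima : (⋃ U ∈ B, {a | IsGreatest (g '' (T ∩ U)) a}).Countable :=
    (TopologicalSpace.countable_countableBasis X).biUnion fun _ _ =>
      Set.Subsingleton.countable fun _ ha _ ha' => ha.unique ha'
  refine hmaxima.mono ?_
  rintro _ ⟨p, ⟨hpT, hp⟩, rfl⟩
  obtain ⟨U, hUB, hpU, hU⟩ : ∃ U ∈ B, p ∈ U ∧ ¬ (U ∩ {q ∈ T | g p < g q}).Nonempty := by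
    simpa only [(TopologicalSpace.isBasis_countableBasis X).mem_closure_iff, not_forall,
      exists_prop] using hp
  have hgreatest : IsGreatest (g '' (T ∩ U)) (g p) := by
    refine ⟨mem_image_of_mem g ⟨hpT, hpU⟩, ?_⟩
    rintro _ ⟨q, ⟨hqT, hqU⟩, rfl⟩
    exact not_lt.1 fun hlt => hU ⟨q, hqU, hqT, hlt⟩
  exact mem_biUnion hUB hgreatest

theorem countable_image_notMem_closure_lt (T : Set X) (g : X → α) :
    (g '' {p ∈ T | p ∉ closure {q ∈ T | g q < g p}}).Countable :=
  countable_image_notMem_closure_gt (α := αᵒᵈ) T g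

theorem exists_mem_closure_gt_and_mem_closure_lt {T : Set X} {g : X → α}
    (hT : ¬ (g '' T).Countable) :
    ∃ p ∈ T, p ∈ closure {q ∈ T | g p < g q} ∧ p ∈ closure {q ∈ T | g q < g p} := by
  by_contra! hbad
  refine hT (((countable_image_notMem_closure_gt T g).union
    (countable_image_notMem_closure_lt T g)).mono ?_)
  rw [← image_union]
  refine image_mono fun p hp => ?_
  by_cases hgt : p ∈ closure {q ∈ T | g p < g q}
  · exact Or.inr ⟨hp, hbad p hp hgt⟩
  · exact Or.inl ⟨hp, hgt⟩

end Accumulation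

theorem dist_fst_lt_and_dist_snd_lt_mem_nhds {α ι : Type*} {β : ι → Type*} [Finite ι]
    [PseudoMetricSpace α] [∀ i, PseudoMetricSpace (β i)] (a : α) (b : ∀ i, β i) {ε : ℝ}
    (hε : 0 < ε) :
    {p : α × (∀ i, β i) | dist a p.1 < ε ∧ ∀ i, dist (b i) (p.2 i) < ε} ∈ 𝓝 (a, b) := by
  have hfst : ∀ᶠ p : α × (∀ i, β i) in 𝓝 (a, b), dist a p.1 < ε :=
    ContinuousAt.eventually_lt (by fun_prop) continuousAt_const (by simpa)
  have hsnd (i : ι) : ∀ᶠ p : α × (∀ i, β i) in 𝓝 (a, b), dist (b i) (p.2 i) < ε :=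
    ContinuousAt.eventually_lt (by fun_prop) continuousAt_const (by simpa)
  exact hfst.and (Filter.eventually_all.2 hsnd)

theorem natCast_le_encard_iff_exists_strictMono {β : Type*} [LinearOrder β] {s : Set β} {k : ℕ} :
    (k : ℕ∞) ≤ s.encard ↔ ∃ b : Fin k → β, StrictMono b ∧ ∀ i, b i ∈ s := by
  constructor
  · intro hk
    obtain ⟨t, hts, htk⟩ := exists_subset_encard_eq hk
    lift t to Finset β using finite_of_encard_eq_coe htk
    have hcard : t.card = k := by simpa only [encard_coe_eq_coe_finsetCard, Nat.cast_inj] using htk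
    exact ⟨t.orderEmbOfFin hcard, OrderEmbedding.strictMono _,
      fun i => hts (t.orderEmbOfFin_mem hcard i)⟩
  · rintro ⟨b, hb, hbs⟩
    calc (k : ℕ∞) = ENat.card (Fin k) := by
          rw [ENat.card_eq_coe_fintype_card, Fintype.card_fin]
      _ ≤ (range b).encard := hb.injective.encard_range
      _ ≤ s.encard := encard_le_encard (range_subset_iff.2 hbs)

/-- The pairs `(a, b)` of a base point `a` and `k` points `b₁ < ⋯ < b_k` of the section `Γ_a`,
the increasing enumeration being encoded as a strictly monotone map on `Fin k`. -/
def sectionTuples {α β : Type*} [Preorder β] (Γ : Set (α × β)) (k : ℕ) : Set (α × (Fin k → β)) :=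
  {p | StrictMono p.2 ∧ ∀ i, (p.1, p.2 i) ∈ Γ}

theorem image_fst_sectionTuples {α β : Type*} [LinearOrder β] (Γ : Set (α × β)) (k : ℕ) :
    Prod.fst '' sectionTuples Γ k = {a | (k : ℕ∞) ≤ {b | (a, b) ∈ Γ}.encard} := by
  ext a
  simp only [sectionTuples, mem_image, mem_ofPred_eq, Prod.exists, exists_and_right,
    exists_eq_right, natCast_le_encard_iff_exists_strictMono]

theorem section_accumulation_lemma_general {α β : Type*}
    [LinearOrder α] [TopologicalSpace α] [SecondCountableTopology α]
    [LinearOrder β] [TopologicalSpace β] [SecondCountableTopology β] (k : ℕ) (Γ : Set (α × β))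
    (h : ¬ {a | (k : ℕ∞) ≤ {b | (a, b) ∈ Γ}.encard}.Countable) :
    ∃ a : α, ∃ b : Fin k → β, StrictMono b ∧ (∀ i, (a, b i) ∈ Γ) ∧
      ∀ U ∈ 𝓝 (a, b),
        (∃ a' : α, a < a' ∧ ∃ b' : Fin k → β, StrictMono b' ∧
          (∀ i, (a', b' i) ∈ Γ) ∧ (a', b') ∈ U) ∧
        (∃ a'' : α, a'' < a ∧ ∃ b'' : Fin k → β, StrictMono b'' ∧
          (∀ i, (a'', b'' i) ∈ Γ) ∧ (a'', b'') ∈ U) := by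
  rw [← image_fst_sectionTuples] at h
  obtain ⟨⟨a, b⟩, ⟨hb, hbΓ⟩, hright, hleft⟩ := exists_mem_closure_gt_and_mem_closure_lt h
  refine ⟨a, b, hb, hbΓ, fun U hU => ?_⟩
  obtain ⟨⟨a', b'⟩, hU', ⟨hb', hbΓ'⟩, ha'⟩ := mem_closure_iff_nhds.1 hright U hU
  obtain ⟨⟨a'', b''⟩, hU'', ⟨hb'', hbΓ''⟩, ha''⟩ := mem_closure_iff_nhds.1 hleft U hU
  exact ⟨⟨a', ha', b', hb', hbΓ', hU'⟩, ⟨a'', ha'', b'', hb'', hbΓ'', hU''⟩⟩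

/-- Combinatorial lemma: if uncountably many vertical sections of `Γ ⊆ ℝ²` have at
least `k` elements, then there is a point `a` with `k` section elements
`b₁ < ⋯ < b_k` that can be approximated arbitrarily well both from the right
(`a' > a`) and from the left (`a'' < a`) by points with `k` section elements. -/
theorem section_accumulation_lemma (k : ℕ) (hk : 0 < k) (Γ : Set (ℝ × ℝ))
    (h : ¬ Set.Countable {a : ℝ | (k : ℕ∞) ≤ {b : ℝ | (a, b) ∈ Γ}.encard}) :
    ∃ a : ℝ, ∃ b : Fin k → ℝ, StrictMono b ∧ (∀ i, (a, b i) ∈ Γ) ∧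
      ∀ ε : ℝ, 0 < ε →
        (∃ a' : ℝ, a < a' ∧ ∃ b' : Fin k → ℝ, StrictMono b' ∧
          (∀ i, (a', b' i) ∈ Γ) ∧ |a - a'| < ε ∧ ∀ i, |b i - b' i| < ε) ∧
        (∃ a'' : ℝ, a'' < a ∧ ∃ b'' : Fin k → ℝ, StrictMono b'' ∧
          (∀ i, (a'', b'' i) ∈ Γ) ∧ |a - a''| < ε ∧ ∀ i, |b i - b'' i| < ε) := by
  obtain ⟨a, b, hb, hbΓ, hacc⟩ := section_accumulation_lemma_general k Γ h
  exact ⟨a, b, hb, hbΓ, fun _ hε => hacc _ (dist_fst_lt_and_dist_snd_lt_mem_nhds a b hε)⟩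
end

section
/- Let μ ⪯ ν be probability measures on ℝ in convex order and let Γ ⊆ ℝ² be a minimising monotonicity set for the pair of cost functions c(x,y) := |x+y| and c'(x,y) := |x+y|y². Let y⁻ < y < y⁺ be reals and λ ∈ [0,1] with y = (1−λ)y⁻ + λy⁺, and define f(t) := (1−λ)|t+y⁻| + λ|t+y⁺| − |t+y| and g(t) := (1−λ)|t+y⁻|(y⁻)² + λ|t+y⁺|(y⁺)² − |t+y|y². Then: (i) there are no x, x' ∈ ℝ with (x,y⁻), (x,y⁺), (x',y) ∈ Γ and f(x) > f(x'); (ii) there are no x, x' ∈ ℝ with (x,y⁻), (x,y⁺), (x',y) ∈ Γ, f(x) = f(x') and g(x) < g(x'). -/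
open MeasureTheory

noncomputable section

/-- `Γ` is a minimising monotonicity set for `(c, c')`: for every finitely
supported measure `α` with support in `Γ` and every competitor `α'` of `α`,
`∫ c dα ≤ ∫ c dα'`, and `∫ c dα = ∫ c dα'` implies `∫ c' dα ≥ ∫ c' dα'`. -/
def IsMinMonotonicitySet (c c' : ℝ → ℝ → ℝ) (Γ : Set (ℝ × ℝ)) : Prop :=
  ∀ α : Measure (ℝ × ℝ), IsFiniteMeasure α → HasFiniteSupportIn α Γ →
    ∀ α' : Measure (ℝ × ℝ), IsCompetitor α α' →
      (∫ p : ℝ × ℝ, c p.1 p.2 ∂α ≤ ∫ p : ℝ × ℝ, c p.1 p.2 ∂α') ∧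
      (∫ p : ℝ × ℝ, c p.1 p.2 ∂α = ∫ p : ℝ × ℝ, c p.1 p.2 ∂α' →
        ∫ p : ℝ × ℝ, c' p.1 p.2 ∂α' ≤ ∫ p : ℝ × ℝ, c' p.1 p.2 ∂α)

/-- `Γ` is a maximising monotonicity set for `(c, c')`: for every finitely
supported measure `α` with support in `Γ` and every competitor `α'` of `α`,
`∫ c dα ≥ ∫ c dα'`, and `∫ c dα = ∫ c dα'` implies `∫ c' dα ≤ ∫ c' dα'`. -/
def IsMaxMonotonicitySet (c c' : ℝ → ℝ → ℝ) (Γ : Set (ℝ × ℝ)) : Prop :=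
  ∀ α : Measure (ℝ × ℝ), IsFiniteMeasure α → HasFiniteSupportIn α Γ →
    ∀ α' : Measure (ℝ × ℝ), IsCompetitor α α' →
      (∫ p : ℝ × ℝ, c p.1 p.2 ∂α' ≤ ∫ p : ℝ × ℝ, c p.1 p.2 ∂α) ∧
      (∫ p : ℝ × ℝ, c p.1 p.2 ∂α = ∫ p : ℝ × ℝ, c p.1 p.2 ∂α' →
        ∫ p : ℝ × ℝ, c' p.1 p.2 ∂α ≤ ∫ p : ℝ × ℝ, c' p.1 p.2 ∂α')

/- The mass sitting on the fibre over `x` with conditional law `β`, together with an atom at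
`(x', y)`, can be rearranged by exchanging `x` and `x'`. When `y` is the barycentre of `β`, this
preserves both marginals and all fibrewise barycentres, and it changes the cost by the difference of
the Jensen gaps of `c x'` and `c x` under `β`; `f` and `g` are such gaps for a two-point `β`. -/

/-- The Jensen gap of `φ` under `β`: the mean of `φ` minus its value at the barycentre of `β`. -/
def jensenGap {E : Type*} [NormedAddCommGroup E] [NormedSpace ℝ E] [MeasurableSpace E]
    (φ : E → ℝ) (β : Measure E) : ℝ :=
  ∫ z, φ z ∂β - φ (∫ z, z ∂β)

section FiberAddAtom

variable {X Y : Type*} [MeasurableSpace X] [MeasurableSpace Y]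

/-- A copy of `β` on the fibre over `x`, plus a unit atom at `p`. For `p = (x', y)`, the
rearrangement that exchanges the two fibres is `fiberAddAtom β x' (x, y)`. -/
def fiberAddAtom (β : Measure Y) (x : X) (p : X × Y) : Measure (X × Y) :=
  β.map (Prod.mk x) + Measure.dirac p

instance (β : Measure Y) [IsFiniteMeasure β] (x : X) (p : X × Y) :
    IsFiniteMeasure (fiberAddAtom β x p) := by
  unfold fiberAddAtom
  infer_instance

lemma map_fst_fiberAddAtom (β : Measure Y) [IsProbabilityMeasure β] (x : X) (p : X × Y) :
    (fiberAddAtom β x p).map Prod.fst = Measure.dirac x + Measure.dirac p.1 := by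
  rw [fiberAddAtom, Measure.map_add _ _ measurable_fst,
    Measure.map_map measurable_fst measurable_prodMk_left, Measure.map_dirac' measurable_fst]
  simp [Function.comp_def]

lemma map_snd_fiberAddAtom (β : Measure Y) (x : X) (p : X × Y) :
    (fiberAddAtom β x p).map Prod.snd = β + Measure.dirac p.2 := by
  rw [fiberAddAtom, Measure.map_add _ _ measurable_snd,
    Measure.map_map measurable_snd measurable_prodMk_left, Measure.map_dirac' measurable_snd]
  simp [Function.comp_def]

variable [MeasurableSingletonClass X] [MeasurableSingletonClass Y]

lemma integral_fiberAddAtom {β : Measure Y} {x : X} {F : X × Y → ℝ}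
    (hF : Integrable (fun z => F (x, z)) β) (p : X × Y) :
    ∫ q, F q ∂fiberAddAtom β x p = ∫ z, F (x, z) ∂β + F p := by
  have hmk : MeasurableEmbedding (Prod.mk x : Y → X × Y) := measurableEmbedding_prodMk_left x
  rw [fiberAddAtom, integral_add_measure (hmk.integrable_map_iff.mpr hF)
    (integrable_dirac (by simp)), hmk.integral_map, integral_dirac]

lemma setIntegral_fiber_fiberAddAtom [DecidableEq X] {β : Measure Y} {f : Y → ℝ}
    (hf : Integrable f β) (x : X) (p : X × Y) (t : X) :
    ∫ q in {q : X × Y | q.1 = t}, f q.2 ∂fiberAddAtom β x p =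
      (if x = t then ∫ z, f z ∂β else 0) + if p.1 = t then f p.2 else 0 := by
  have hfiber : MeasurableSet {q : X × Y | q.1 = t} := measurable_fst (measurableSet_singleton t)
  rw [← integral_indicator hfiber, integral_fiberAddAtom]
  · by_cases hx : x = t <;> simp [Set.indicator_apply, hx]
  · by_cases hx : x = t <;> simp [hx, hf]

lemma fiberAddAtom_compl_finset [DecidableEq X] [DecidableEq Y] {β : Measure Y} {T : Finset Y}
    (hβ : β (↑T)ᶜ = 0) (x : X) (p : X × Y) :
    fiberAddAtom β x p (↑(insert p ({x} ×ˢ T) : Finset (X × Y)))ᶜ = 0 := by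
  rw [fiberAddAtom, Measure.add_apply, add_eq_zero]
  constructor
  · rw [(measurableEmbedding_prodMk_left x).map_apply]
    exact measure_mono_null (fun z hz => by simp_all) hβ
  · simp

end FiberAddAtom

lemma integrable_of_compl_finset_null {Y : Type*} [MeasurableSpace Y] [MeasurableSingletonClass Y]
    {E : Type*} [NormedAddCommGroup E] {β : Measure Y} [IsFiniteMeasure β] {T : Finset Y}
    (hβ : β (↑T)ᶜ = 0) (f : Y → E) : Integrable f β := by
  rw [← Measure.restrict_eq_self_of_ae_mem (mem_ae_iff.mpr hβ)]
  exact IntegrableOn.finset (s := T)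

section Exchange

variable {β : Measure ℝ} {T : Finset ℝ}

lemma hasFiniteSupportIn_fiberAddAtom {Γ : Set (ℝ × ℝ)} (hβ : β (↑T)ᶜ = 0) {x : ℝ}
    (hx : ∀ z ∈ T, (x, z) ∈ Γ) {p : ℝ × ℝ} (hp : p ∈ Γ) :
    HasFiniteSupportIn (fiberAddAtom β x p) Γ := by
  refine ⟨_, fun q hq => ?_, fiberAddAtom_compl_finset hβ x p⟩
  obtain rfl | ⟨z, hz, rfl⟩ : q = p ∨ ∃ z ∈ T, (x, z) = q := by simpa using hq
  exacts [hp, hx z hz]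

variable [IsProbabilityMeasure β]

lemma isCompetitor_fiberAddAtom_swap (hβ : β (↑T)ᶜ = 0) (x x' : ℝ) :
    IsCompetitor (fiberAddAtom β x (x', ∫ z, z ∂β)) (fiberAddAtom β x' (x, ∫ z, z ∂β)) := by
  refine ⟨⟨_, fiberAddAtom_compl_finset hβ _ _⟩, ?_, ?_, fun t => ?_⟩
  · simp only [map_fst_fiberAddAtom, add_comm]
  · simp only [map_snd_fiberAddAtom]
  · have hid : Integrable (fun z : ℝ => z) β := integrable_of_compl_finset_null hβ _
    rw [setIntegral_fiber_fiberAddAtom hid, setIntegral_fiber_fiberAddAtom hid, add_comm]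

lemma integral_fiberAddAtom_swap_sub (hβ : β (↑T)ᶜ = 0) (c : ℝ → ℝ → ℝ) (x x' : ℝ) :
    ∫ p, c p.1 p.2 ∂fiberAddAtom β x' (x, ∫ z, z ∂β) -
        ∫ p, c p.1 p.2 ∂fiberAddAtom β x (x', ∫ z, z ∂β) =
      jensenGap (c x') β - jensenGap (c x) β := by
  have hc : ∀ t, Integrable (c t) β := fun t => integrable_of_compl_finset_null hβ (c t)
  rw [integral_fiberAddAtom (hc x'), integral_fiberAddAtom (hc x)]
  simp only [jensenGap]
  ring

variable {c c' : ℝ → ℝ → ℝ} {Γ : Set (ℝ × ℝ)} {x x' : ℝ}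

lemma IsMinMonotonicitySet.jensenGap_le (hΓ : IsMinMonotonicitySet c c' Γ) (hβ : β (↑T)ᶜ = 0)
    (hx : ∀ z ∈ T, (x, z) ∈ Γ) (hx' : (x', ∫ z, z ∂β) ∈ Γ) :
    jensenGap (c x) β ≤ jensenGap (c x') β := by
  have hmin := (hΓ _ inferInstance (hasFiniteSupportIn_fiberAddAtom hβ hx hx') _
    (isCompetitor_fiberAddAtom_swap hβ x x')).1
  linarith [integral_fiberAddAtom_swap_sub hβ c x x']

lemma IsMinMonotonicitySet.jensenGap_le_of_jensenGap_eq (hΓ : IsMinMonotonicitySet c c' Γ)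
    (hβ : β (↑T)ᶜ = 0) (hx : ∀ z ∈ T, (x, z) ∈ Γ) (hx' : (x', ∫ z, z ∂β) ∈ Γ)
    (heq : jensenGap (c x) β = jensenGap (c x') β) :
    jensenGap (c' x') β ≤ jensenGap (c' x) β := by
  have hcost := integral_fiberAddAtom_swap_sub hβ c x x'
  have hmax := (hΓ _ inferInstance (hasFiniteSupportIn_fiberAddAtom hβ hx hx') _
    (isCompetitor_fiberAddAtom_swap hβ x x')).2 (by linarith)
  linarith [integral_fiberAddAtom_swap_sub hβ c' x x']

end Exchange

lemma bernoulliMeasure_compl_pair {X : Type*} [MeasurableSpace X] [MeasurableSingletonClass X]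
    [DecidableEq X] (a b : X) (p : unitInterval) :
    ProbabilityTheory.bernoulliMeasure a b p (↑({a, b} : Finset X))ᶜ = 0 := by
  simp [ProbabilityTheory.bernoulliMeasure_def]

lemma jensenGap_bernoulliMeasure {E : Type*} [NormedAddCommGroup E] [NormedSpace ℝ E]
    [CompleteSpace E] [MeasurableSpace E] [MeasurableSingletonClass E] (φ : E → ℝ) (a b : E)
    (p : unitInterval) :
    jensenGap φ (ProbabilityTheory.bernoulliMeasure a b p) =
      p * φ a + (1 - p) * φ b - φ ((p : ℝ) • a + (1 - p : ℝ) • b) := by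
  simp only [jensenGap, ProbabilityTheory.integral_bernoulliMeasure, smul_eq_mul]

theorem min_variational_configurations_general {c c' : ℝ → ℝ → ℝ} {Γ : Set (ℝ × ℝ)}
    (hΓ : IsMinMonotonicitySet c c' Γ) {β : Measure ℝ} [IsProbabilityMeasure β] {T : Finset ℝ}
    (hβ : β (↑T)ᶜ = 0) :
    (¬ ∃ x x' : ℝ, (∀ z ∈ T, (x, z) ∈ Γ) ∧ (x', ∫ z, z ∂β) ∈ Γ ∧
      jensenGap (c x') β < jensenGap (c x) β) ∧
    (¬ ∃ x x' : ℝ, (∀ z ∈ T, (x, z) ∈ Γ) ∧ (x', ∫ z, z ∂β) ∈ Γ ∧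
      jensenGap (c x) β = jensenGap (c x') β ∧ jensenGap (c' x) β < jensenGap (c' x') β) :=
  ⟨fun ⟨_, _, hx, hx', hlt⟩ => hlt.not_ge (hΓ.jensenGap_le hβ hx hx'),
    fun ⟨_, _, hx, hx', heq, hlt⟩ =>
      hlt.not_ge (hΓ.jensenGap_le_of_jensenGap_eq hβ hx hx' heq)⟩

/-- Lemma 7 (minimising case): forbidden configurations on the monotonicity set of
a minimising (and secondarily maximising) martingale transport for the cost
`c(x,y) = |x+y|` with secondary cost `c'(x,y) = |x+y|·y²`. -/
theorem min_variational_configurations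
    (μ ν : Measure ℝ) [IsProbabilityMeasure μ] [IsProbabilityMeasure ν]
    (hconv : InConvexOrder μ ν)
    (Γ : Set (ℝ × ℝ))
    (hΓ : IsMinMonotonicitySet (fun x y => |x + y|) (fun x y => |x + y| * y ^ 2) Γ)
    (ym y yp : ℝ) (hy1 : ym < y) (hy2 : y < yp)
    (lam : ℝ) (hlam : lam ∈ Set.Icc (0 : ℝ) 1)
    (hconvcomb : y = (1 - lam) * ym + lam * yp)
    (f g : ℝ → ℝ)
    (hf : f = fun t => (1 - lam) * |t + ym| + lam * |t + yp| - |t + y|)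
    (hg : g = fun t =>
      (1 - lam) * |t + ym| * ym ^ 2 + lam * |t + yp| * yp ^ 2 - |t + y| * y ^ 2) :
    (¬ ∃ x x' : ℝ, (x, ym) ∈ Γ ∧ (x, yp) ∈ Γ ∧ (x', y) ∈ Γ ∧ f x' < f x) ∧
    (¬ ∃ x x' : ℝ, (x, ym) ∈ Γ ∧ (x, yp) ∈ Γ ∧ (x', y) ∈ Γ ∧
      f x = f x' ∧ g x < g x') := by
  simpa [hf, hg, hconvcomb, jensenGap_bernoulliMeasure, ProbabilityTheory.integral_bernoulliMeasure,
      add_comm, and_assoc, mul_assoc] using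
    min_variational_configurations_general hΓ
      (bernoulliMeasure_compl_pair ym yp (unitInterval.symm ⟨lam, hlam⟩))
end
end

section
/- Let μ ⪯ ν be probability measures on ℝ in convex order with supp(μ) ⊆ [0,∞), and let Γ ⊆ ℝ² be a minimising monotonicity set for the pair of cost functions c(x,y) := |x+y| and c'(x,y) := |x+y|y². Suppose (x,y⁺), (x,y⁻), (x',y') ∈ Γ with y⁻ < −x < y⁺ and y⁻ < y' < y⁺. Then it cannot be that (i) −x < y' and x < x', and it cannot be that (ii) y' < −x and x' < x. -/
open MeasureTheory

noncomputable section

/-!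
Let `ν` be a finitely supported probability measure with mean `m`. If `{x} × supp ν` and `(x', m)`
lie in `Γ`, exchanging the roles of `x` and `x'` turns `δ_x ⊗ ν + δ_(x', m)` into a competitor, so
`D y = c x' y - c x y` satisfies Jensen's inequality `D m ≤ ∫ D dν`. For `c x y = |x + y|` the
triangle inequality gives `D ≤ |x' - x|`, with equality exactly where `(x' - x) * (x + y) ≥ 0`. In
either forbidden configuration `D` attains this bound at `y'`, an interior point of the segment from
`y⁻` to `y⁺`, hence at both endpoints; but at one of them the product is negative.
-/

open ProbabilityTheory

section FiniteSupport

variable {α E : Type*} [MeasurableSpace α] [MeasurableSingletonClass α] [NormedAddCommGroup E]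

lemma integrable_of_measure_compl_finset_eq_zero {μ : Measure α} [IsFiniteMeasure μ]
    {S : Finset α} (hS : μ (↑S)ᶜ = 0) (f : α → E) : Integrable f μ := by
  rw [← Measure.restrict_eq_self_of_ae_mem (mem_ae_iff.2 hS)]
  exact IntegrableOn.finset

lemma bernoulliMeasure_compl_pair_eq_zero [DecidableEq α] (y₁ y₂ : α) (p : unitInterval) :
    bernoulliMeasure y₁ y₂ p (↑({y₁, y₂} : Finset α))ᶜ = 0 := by
  simp [bernoulliMeasure_def]

end FiniteSupport

/-- The plan `δ_x ⊗ ν + δ_(x', m)`, where `m` is the mean of `ν`: the mass at `x` is spread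
according to `ν`, and the mass at `x'` is sent to the mean. Swapping `x` and `x'` produces a
competitor. -/
def spreadPlan (ν : Measure ℝ) (x x' : ℝ) : Measure (ℝ × ℝ) :=
  ν.map (Prod.mk x) + Measure.dirac (x', ∫ y, y ∂ν)

section SpreadPlan

variable {ν : Measure ℝ} {S : Finset ℝ}

lemma map_snd_spreadPlan (x x' : ℝ) :
    (spreadPlan ν x x').map Prod.snd = ν + Measure.dirac (∫ y, y ∂ν) := by
  rw [spreadPlan, Measure.map_add _ _ measurable_snd,
    Measure.map_map measurable_snd measurable_prodMk_left, Measure.map_dirac' measurable_snd]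
  exact congrArg (· + _) Measure.map_id

lemma hasFiniteSupportIn_spreadPlan (hS : ν (↑S)ᶜ = 0) {Γ : Set (ℝ × ℝ)}
    {x x' : ℝ} (hx : ∀ y ∈ S, (x, y) ∈ Γ) (hx' : (x', ∫ y, y ∂ν) ∈ Γ) :
    HasFiniteSupportIn (spreadPlan ν x x') Γ := by
  classical
  refine ⟨insert (x', ∫ y, y ∂ν) (S.image (Prod.mk x)), ?_, ?_⟩
  · simpa [Set.insert_subset_iff, Set.subset_def, hx'] using hx
  · have hsub : (↑S : Set ℝ) ⊆ Prod.mk x ⁻¹' ↑(insert (x', ∫ y, y ∂ν) (S.image (Prod.mk x))) :=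
      fun y hy ↦ Finset.mem_insert_of_mem (Finset.mem_image_of_mem _ hy)
    rw [spreadPlan, Measure.add_apply,
      Measure.map_apply measurable_prodMk_left (Finset.measurableSet _).compl]
    exact add_eq_zero.2 ⟨measure_mono_null (Set.compl_subset_compl.2 hsub) hS, by simp⟩

instance [IsFiniteMeasure ν] (x x' : ℝ) : IsFiniteMeasure (spreadPlan ν x x') := by
  unfold spreadPlan
  infer_instance

lemma integral_spreadPlan {E : Type*} [NormedAddCommGroup E] [NormedSpace ℝ E] [CompleteSpace E]
    [IsFiniteMeasure ν] (hS : ν (↑S)ᶜ = 0) (x x' : ℝ) (f : ℝ × ℝ → E) :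
    ∫ p, f p ∂spreadPlan ν x x' = ∫ y, f (x, y) ∂ν + f (x', ∫ y, y ∂ν) := by
  have hemb := measurableEmbedding_prodMk_left (β := ℝ) x
  rw [spreadPlan, integral_add_measure, hemb.integral_map, integral_dirac]
  · exact hemb.integrable_map_iff.2 (integrable_of_measure_compl_finset_eq_zero hS _)
  · exact integrable_dirac (by simp)

lemma setIntegral_fiber_spreadPlan [IsFiniteMeasure ν] (hS : ν (↑S)ᶜ = 0) (x x' t : ℝ) :
    ∫ p in {p : ℝ × ℝ | p.1 = t}, p.2 ∂spreadPlan ν x x' =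
      (if x = t then ∫ y, y ∂ν else 0) + if x' = t then ∫ y, y ∂ν else 0 := by
  rw [← integral_indicator (measurableSet_eq_fun measurable_fst measurable_const),
    integral_spreadPlan hS]
  simp only [Set.indicator_apply, Set.mem_ofPred_eq]
  split_ifs <;> simp

variable [IsProbabilityMeasure ν]

lemma map_fst_spreadPlan (x x' : ℝ) :
    (spreadPlan ν x x').map Prod.fst = Measure.dirac x + Measure.dirac x' := by
  have hfst : Prod.fst ∘ Prod.mk x = fun _ : ℝ ↦ x := rfl
  rw [spreadPlan, Measure.map_add _ _ measurable_fst,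
    Measure.map_map measurable_fst measurable_prodMk_left, Measure.map_dirac' measurable_fst,
    hfst, Measure.map_const, measure_univ, one_smul]

lemma isCompetitor_spreadPlan_swap (hS : ν (↑S)ᶜ = 0) (x x' : ℝ) :
    IsCompetitor (spreadPlan ν x x') (spreadPlan ν x' x) := by
  obtain ⟨T, -, hT⟩ := hasFiniteSupportIn_spreadPlan (Γ := Set.univ) (x := x') (x' := x) hS
    (fun _ _ ↦ Set.mem_univ _) (Set.mem_univ _)
  refine ⟨⟨T, hT⟩, ?_, ?_, fun t ↦ ?_⟩
  · rw [map_fst_spreadPlan, map_fst_spreadPlan, add_comm]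
  · rw [map_snd_spreadPlan, map_snd_spreadPlan]
  · rw [setIntegral_fiber_spreadPlan hS, setIntegral_fiber_spreadPlan hS, add_comm]

end SpreadPlan

namespace IsMinMonotonicitySet

variable {c c' : ℝ → ℝ → ℝ} {Γ : Set (ℝ × ℝ)} {x x' y₁ y₂ : ℝ}

theorem sub_le_integral_sub (hΓ : IsMinMonotonicitySet c c' Γ) {ν : Measure ℝ}
    [IsProbabilityMeasure ν] {S : Finset ℝ} (hS : ν (↑S)ᶜ = 0) (hx : ∀ y ∈ S, (x, y) ∈ Γ)
    (hx' : (x', ∫ y, y ∂ν) ∈ Γ) :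
    c x' (∫ y, y ∂ν) - c x (∫ y, y ∂ν) ≤ ∫ y, (c x' y - c x y) ∂ν := by
  have hle := (hΓ _ inferInstance (hasFiniteSupportIn_spreadPlan hS hx hx') _
    (isCompetitor_spreadPlan_swap hS x x')).1
  rw [integral_spreadPlan hS, integral_spreadPlan hS] at hle
  rw [integral_sub (integrable_of_measure_compl_finset_eq_zero hS _)
    (integrable_of_measure_compl_finset_eq_zero hS _)]
  linarith

theorem sub_le_combo_sub (hΓ : IsMinMonotonicitySet c c' Γ) {a b : ℝ} (ha : 0 ≤ a) (hb : 0 ≤ b)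
    (hab : a + b = 1) (h₁ : (x, y₁) ∈ Γ) (h₂ : (x, y₂) ∈ Γ) (h' : (x', a * y₁ + b * y₂) ∈ Γ) :
    c x' (a * y₁ + b * y₂) - c x (a * y₁ + b * y₂) ≤
      a * (c x' y₁ - c x y₁) + b * (c x' y₂ - c x y₂) := by
  obtain rfl : b = 1 - a := by linarith
  let ν := bernoulliMeasure y₁ y₂ ⟨a, ha, sub_nonneg.1 hb⟩
  have hν (f : ℝ → ℝ) : ∫ y, f y ∂ν = a * f y₁ + (1 - a) * f y₂ :=
    integral_bernoulliMeasure y₁ y₂ _ f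
  have hmean := hν fun y ↦ y
  rw [← hmean, ← hν fun y ↦ c x' y - c x y]
  exact hΓ.sub_le_integral_sub (bernoulliMeasure_compl_pair_eq_zero y₁ y₂ _) (by simp [h₁, h₂])
    (hmean ▸ h')

end IsMinMonotonicitySet

section AbsoluteValueCost

section OrderedGroup

variable {G : Type*} [AddCommGroup G] [LinearOrder G] [IsOrderedAddMonoid G]

lemma abs_add_sub_abs_add_le (x x' y : G) : |x' + y| - |x + y| ≤ |x' - x| := by
  simpa only [add_sub_add_right_eq_sub] using abs_sub_abs_le_abs_sub (x' + y) (x + y)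

lemma abs_add_sub_abs_add_eq_iff {x x' y : G} :
    |x' + y| - |x + y| = |x' - x| ↔ 0 ≤ x' - x ∧ 0 ≤ x + y ∨ x' - x ≤ 0 ∧ x + y ≤ 0 := by
  rw [← abs_add_eq_add_abs_iff, sub_eq_iff_eq_add, ← add_assoc, sub_add_cancel]

end OrderedGroup

variable {c' : ℝ → ℝ → ℝ} {Γ : Set (ℝ × ℝ)} {x x' y y₁ y₂ : ℝ}

lemma IsMinMonotonicitySet.abs_add_sub_abs_add_eq_left
    (hΓ : IsMinMonotonicitySet (fun x y ↦ |x + y|) c' Γ)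
    (h₁ : (x, y₁) ∈ Γ) (h₂ : (x, y₂) ∈ Γ) (h' : (x', y) ∈ Γ) (hy : y ∈ openSegment ℝ y₁ y₂)
    (heq : |x' + y| - |x + y| = |x' - x|) : |x' + y₁| - |x + y₁| = |x' - x| := by
  obtain ⟨a, b, ha, hb, hab, rfl⟩ := hy
  simp only [smul_eq_mul] at h' heq
  have hjensen := hΓ.sub_le_combo_sub ha.le hb.le hab h₁ h₂ h'
  refine (abs_add_sub_abs_add_le x x' y₁).antisymm (le_of_mul_le_mul_left ?_ ha)
  calc a * |x' - x| = |x' - x| - b * |x' - x| := by linear_combination |x' - x| * hab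
    _ ≤ |x' - x| - b * (|x' + y₂| - |x + y₂|) := by
      gcongr; exact abs_add_sub_abs_add_le x x' y₂
    _ ≤ a * (|x' + y₁| - |x + y₁|) := by linarith

end AbsoluteValueCost

theorem min_forbidden_configurations_general {c' : ℝ → ℝ → ℝ} {Γ : Set (ℝ × ℝ)}
    (hΓ : IsMinMonotonicitySet (fun x y ↦ |x + y|) c' Γ) {x x' ym yp y' : ℝ}
    (hp : (x, yp) ∈ Γ) (hm : (x, ym) ∈ Γ) (h' : (x', y') ∈ Γ)
    (h1 : ym < -x) (h2 : -x < yp) (h3 : ym < y') (h4 : y' < yp) :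
    ¬(-x ≤ y' ∧ x < x') ∧ ¬(y' ≤ -x ∧ x' < x) := by
  have hy : y' ∈ openSegment ℝ ym yp := by
    rw [openSegment_eq_Ioo (h3.trans h4)]
    exact ⟨h3, h4⟩
  constructor
  · rintro ⟨hxy, hxx⟩
    have heq := hΓ.abs_add_sub_abs_add_eq_left hm hp h' hy
      (abs_add_sub_abs_add_eq_iff.2 (.inl ⟨by linarith, by linarith⟩))
    rcases abs_add_sub_abs_add_eq_iff.1 heq with h | h <;> linarith
  · rintro ⟨hxy, hxx⟩
    have heq := hΓ.abs_add_sub_abs_add_eq_left hp hm h' (openSegment_symm ℝ ym yp ▸ hy)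
      (abs_add_sub_abs_add_eq_iff.2 (.inr ⟨by linarith, by linarith⟩))
    rcases abs_add_sub_abs_add_eq_iff.1 heq with h | h <;> linarith

/-- Corollary 8 (minimising case): on the monotonicity set of a minimising
(and secondarily maximising) martingale transport for `c(x,y) = |x+y|`,
`c'(x,y) = |x+y|·y²`, with `supp μ ⊆ [0,∞)`: if `(x,y⁺), (x,y⁻), (x',y') ∈ Γ`
with `y⁻ < -x < y⁺` and `y⁻ < y' < y⁺`, then neither
(i) `-x < y'` and `x < x'`, nor (ii) `y' < -x` and `x' < x` can hold. -/
theorem min_forbidden_configurations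
    (μ ν : Measure ℝ) [IsProbabilityMeasure μ] [IsProbabilityMeasure ν]
    (hconv : InConvexOrder μ ν)
    (hsupp : μ (Set.Iio 0) = 0)
    (Γ : Set (ℝ × ℝ))
    (hΓ : IsMinMonotonicitySet (fun x y => |x + y|) (fun x y => |x + y| * y ^ 2) Γ)
    (x x' ym yp y' : ℝ)
    (hp : (x, yp) ∈ Γ) (hm : (x, ym) ∈ Γ) (h' : (x', y') ∈ Γ)
    (h1 : ym < -x) (h2 : -x < yp) (h3 : ym < y') (h4 : y' < yp) :
    ¬(-x < y' ∧ x < x') ∧ ¬(y' < -x ∧ x' < x) := by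
  have hforbid := min_forbidden_configurations_general hΓ hp hm h' h1 h2 h3 h4
  exact hforbid.imp (mt (And.imp_left le_of_lt)) (mt (And.imp_left le_of_lt))
end
end
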